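/- arXiv:2511.03358 — 2 statements merged into one kernel-verified Lean document; each statement's English description precedes it below -/
import Mathlib

section
/- Fix ν = 1 (Itô interpretation), k > 0, a > 0 and θ > 0. Then there exists s > 0 such that for every σa > 0 one has F'_μ(1, σa, k·σa, a, θ)[0] > 0 if and only if σa < s. In particular, along the ray σm = k·σa the system undergoes exactly one phase transition, from the stable phase (three stationary measures) to the unstable phase (one stationary measure), as σa increases. -/
open MeasureTheory Real Set Filter

/-- Unnormalised stationary density ρ0[μ](x) of the McKean–Vlasov SDE
`dX = (aX − X³ − θ(X − m₁))dt + σa dB¹ + σm X ∘_ν dB²`. -/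
noncomputable def rho0 (ν σa σm a θ μ x : ℝ) : ℝ :=
  Real.exp (((a - θ - ν * σm ^ 2 + σa ^ 2 / σm ^ 2) / σm ^ 2) *
      Real.log (1 + (σm ^ 2 / σa ^ 2) * x ^ 2) +
    (2 * θ * μ / (σa * σm)) * Real.arctan (σm * x / σa) - x ^ 2 / σm ^ 2)

/-- Normalisation constant Z[μ] = ∫ ρ0[μ]. -/
noncomputable def Z (ν σa σm a θ μ : ℝ) : ℝ := ∫ x : ℝ, rho0 ν σa σm a θ μ x

/-- Self-consistency function F(ν,σa,σm,a,θ)[μ] = (∫ (x−μ)·ρ0[μ]) / Z[μ]. -/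
noncomputable def F (ν σa σm a θ μ : ℝ) : ℝ :=
  (∫ x : ℝ, (x - μ) * rho0 ν σa σm a θ μ x) / Z ν σa σm a θ μ

/-- F'_μ[0] : the derivative at μ = 0 of μ ↦ F(ν,σa,σm,a,θ)[μ]. -/
noncomputable def Fmu' (ν σa σm a θ : ℝ) : ℝ := deriv (fun μ => F ν σa σm a θ μ) 0


/-! ### Elementary lemmas -/

lemma aux_sinh_lt {p q : ℝ} (hp : 0 < p) (hpq : p < q) : q * sinh p < p * sinh q := by
  have hconv : StrictConvexOn ℝ (Ici (0 : ℝ)) sinh := by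
    apply StrictMonoOn.strictConvexOn_of_deriv (convex_Ici 0) Real.continuous_sinh.continuousOn
    rw [interior_Ici, Real.deriv_sinh]
    intro x hx y hy hxy
    rw [Real.cosh_lt_cosh, abs_of_pos hx, abs_of_pos hy]; exact hxy
  have hq : 0 < q := hp.trans hpq
  have ha : 0 < 1 - p / q := by rw [sub_pos, div_lt_one hq]; exact hpq
  have hb : 0 < p / q := by positivity
  have h0m : (0 : ℝ) ∈ Ici (0 : ℝ) := by simp
  have hqm : q ∈ Ici (0 : ℝ) := hq.le
  have h := hconv.2 h0m hqm hq.ne ha hb (by ring)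
  simp only [smul_eq_mul, mul_zero, zero_add, Real.sinh_zero] at h
  rw [div_mul_cancel₀ _ hq.ne'] at h
  calc q * sinh p < q * (p / q * sinh q) := by gcongr
    _ = p * sinh q := by field_simp

lemma aux_sinh_ratio {b b0 m1 m2 : ℝ} (hb : 0 < b) (hbb : b < b0) (hm1 : 0 < m1) (hm : m1 < m2) :
    sinh (m2 * b) * sinh (m1 * b0) < sinh (m1 * b) * sinh (m2 * b0) := by
  have hb0 : 0 < b0 := hb.trans hbb
  have hs : ∀ m ∈ Ioi (0 : ℝ), 0 < sinh (m * b0) := fun m hm => Real.sinh_pos_iff.2 (mul_pos hm hb0)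
  have hd : ∀ m ∈ Ioi (0 : ℝ), HasDerivAt (fun m => sinh (m * b) / sinh (m * b0))
      ((cosh (m * b) * b * sinh (m * b0) - sinh (m * b) * (cosh (m * b0) * b0)) / sinh (m * b0) ^ 2) m := by
    intro m hm
    have h1 : HasDerivAt (fun m => sinh (m * b)) (cosh (m * b) * b) m := by
      simpa using ((hasDerivAt_id m).mul_const b).sinh
    have h2 : HasDerivAt (fun m => sinh (m * b0)) (cosh (m * b0) * b0) m := by
      simpa using ((hasDerivAt_id m).mul_const b0).sinh
    exact h1.div h2 (hs m hm).ne'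
  have hanti : StrictAntiOn (fun m => sinh (m * b) / sinh (m * b0)) (Ioi 0) := by
    apply strictAntiOn_of_deriv_neg (convex_Ioi 0)
    · intro m hm; exact (hd m hm).continuousAt.continuousWithinAt
    · rw [interior_Ioi]
      intro m hm
      rw [(hd m hm).deriv]
      apply div_neg_of_neg_of_pos _ (pow_pos (hs m hm) 2)
      have hm' : 0 < m := hm
      have key := aux_sinh_lt (p := m * (b0 - b)) (q := m * (b0 + b))
        (mul_pos hm' (by linarith)) (by nlinarith)
      have e1 : m * (b0 - b) = m * b0 - m * b := by ring
      have e2 : m * (b0 + b) = m * b0 + m * b := by ring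
      rw [e1, e2, Real.sinh_sub, Real.sinh_add] at key
      have : m * (2 * (cosh (m * b) * b * sinh (m * b0) - sinh (m * b) * (cosh (m * b0) * b0))) < 0 := by
        nlinarith
      by_contra hcon
      push Not at hcon
      have := mul_nonneg hm'.le hcon
      nlinarith
  have h := hanti hm1 (hm1.trans hm) hm
  simp only at h
  rw [div_lt_div_iff₀ (hs _ (hm1.trans hm)) (hs _ hm1)] at h
  linarith

lemma aux_sinh_add {p q : ℝ} (hp : 0 ≤ p) (hq : 0 ≤ q) : sinh p * (1 + q) ≤ sinh (p + q) := by
  have h1 := Real.sinh_nonneg_iff.2 hp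
  have h2 := Real.sinh_nonneg_iff.2 hq
  have h3 : sinh p ≤ cosh p := (Real.sinh_lt_cosh p).le
  have h4 := Real.add_one_le_exp q
  rw [← Real.cosh_add_sinh] at h4
  rw [Real.sinh_add]
  nlinarith

lemma aux_arctan {l z : ℝ} (hl : 0 < l) (hl1 : l ≤ 1) (hz : 0 ≤ z) :
    l * arctan z ≤ arctan (l * z) := by
  have hd : ∀ x : ℝ, HasDerivAt (fun x => arctan (l * x) - l * arctan x)
      (1 / (1 + (l * x) ^ 2) * l - l * (1 / (1 + x ^ 2))) x := by
    intro x
    have h1 : HasDerivAt (fun x : ℝ => l * x) l x := by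
      simpa using (hasDerivAt_id x).const_mul l
    exact h1.arctan.sub ((hasDerivAt_arctan x).const_mul l)
  have hmono : Monotone (fun x => arctan (l * x) - l * arctan x) := by
    apply monotone_of_deriv_nonneg (fun x => (hd x).differentiableAt)
    intro x
    rw [(hd x).deriv]
    have : 1 / (1 + x ^ 2) ≤ 1 / (1 + (l * x) ^ 2) := by
      apply one_div_le_one_div_of_le (by positivity)
      have : l ^ 2 ≤ 1 := by nlinarith
      nlinarith [sq_nonneg x]
    nlinarith
  have := hmono hz
  simp at this
  linarith

lemma aux_log_mono {K l u1 u2 : ℝ} (hK : 0 < K) (hl : 0 < l) (hl1 : l ≤ 1) (hu : 0 ≤ u1)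
    (h12 : u1 ≤ u2) :
    log (1 + K * (l * u1)) - l * log (1 + K * u1) ≤ log (1 + K * (l * u2)) - l * log (1 + K * u2) := by
  have hd : ∀ x : ℝ, 0 ≤ x → HasDerivAt (fun x => log (1 + K * (l * x)) - l * log (1 + K * x))
      (K * l / (1 + K * (l * x)) - l * (K / (1 + K * x))) x := by
    intro x hx
    have h1 : HasDerivAt (fun x : ℝ => 1 + K * (l * x)) (K * l) x := by
      simpa using (((hasDerivAt_id x).const_mul l).const_mul K).const_add 1
    have h2 : HasDerivAt (fun x : ℝ => 1 + K * x) K x := by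
      simpa using ((hasDerivAt_id x).const_mul K).const_add 1
    exact (h1.log (by positivity)).sub ((h2.log (by positivity)).const_mul l)
  have hmono : MonotoneOn (fun x => log (1 + K * (l * x)) - l * log (1 + K * x)) (Ici 0) := by
    apply monotoneOn_of_deriv_nonneg (convex_Ici 0)
    · intro x hx; exact (hd x hx).continuousAt.continuousWithinAt
    · rw [interior_Ici]; intro x hx
      exact (hd x (le_of_lt hx)).differentiableAt.differentiableWithinAt
    · rw [interior_Ici]; intro x hx
      have hx : 0 < x := hx
      rw [(hd x hx.le).deriv]
      have : K * l / (1 + K * x) ≤ K * l / (1 + K * (l * x)) := by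
        apply div_le_div_of_nonneg_left (by positivity) (by positivity)
        have : l * x ≤ x := by nlinarith
        nlinarith
      have e : l * (K / (1 + K * x)) = K * l / (1 + K * x) := by ring
      rw [e]; linarith
  exact hmono hu (hu.trans h12) h12

lemma aux_frac_mono {K l u1 u2 : ℝ} (hK : 0 < K) (hl : 0 < l) (hl1 : l ≤ 1) (hu : 0 ≤ u1)
    (h12 : u1 ≤ u2) :
    (1 + K * u1) / (1 + K * (l * u1)) ≤ (1 + K * u2) / (1 + K * (l * u2)) := by
  have : 0 ≤ u2 := hu.trans h12
  rw [div_le_div_iff₀ (by positivity) (by positivity)]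
  nlinarith [mul_nonneg hK.le (mul_nonneg (sub_nonneg.2 hl1) (sub_nonneg.2 h12))]

lemma aux_sSup {P : ℝ → Prop} (hne : ∃ σ, 0 < σ ∧ P σ) (hbd : ∃ σ, 0 < σ ∧ ¬ P σ)
    (hdown : ∀ σ σ', 0 < σ' → σ' < σ → P σ → P σ')
    (hopen : ∀ σ, 0 < σ → P σ → ∃ σ', σ < σ' ∧ P σ') :
    ∃ s, 0 < s ∧ ∀ σ, 0 < σ → (P σ ↔ σ < s) := by
  obtain ⟨σ0, h0, hP0⟩ := hne
  obtain ⟨σ1, h1, hP1⟩ := hbd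
  have hB : BddAbove {σ | 0 < σ ∧ P σ} := by
    refine ⟨σ1, ?_⟩
    rintro σ ⟨h, hP⟩
    by_contra hc
    push Not at hc
    exact hP1 (hdown σ σ1 h1 hc hP)
  refine ⟨sSup {σ | 0 < σ ∧ P σ}, lt_of_lt_of_le h0 (le_csSup hB ⟨h0, hP0⟩), ?_⟩
  intro σ hσ
  constructor
  · intro hP
    obtain ⟨σ', h, hP'⟩ := hopen σ hσ hP
    exact lt_of_lt_of_le h (le_csSup hB ⟨hσ.trans h, hP'⟩)
  · intro h
    obtain ⟨σ', ⟨_, hP'⟩, h'⟩ := exists_lt_of_lt_csSup (s := {σ | 0 < σ ∧ P σ}) ⟨σ0, h0, hP0⟩ h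
    exact hdown σ' σ hσ h' hP'

/-! ### Reduced density and integrability -/

noncomputable def VV (k a θ x : ℝ) : ℝ :=
  ((a - θ + 1 / k ^ 2) / k ^ 2) * log (1 + k ^ 2 * x ^ 2) - x ^ 2 / k ^ 2

noncomputable def RR (k a θ t x : ℝ) : ℝ := exp (t * VV k a θ x) / (1 + k ^ 2 * x ^ 2)

lemma rho0_eq {k a θ σ : ℝ} (hk : 0 < k) (hσ : 0 < σ) (μ x : ℝ) :
    rho0 1 σ (k * σ) a θ μ x
      = exp (2 * θ * (1 / σ ^ 2) / k * μ * arctan (k * x)) * RR k a θ (1 / σ ^ 2) x := by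
  unfold rho0 RR VV
  have hg : 0 < 1 + k ^ 2 * x ^ 2 := by positivity
  have e1 : (k * σ) ^ 2 / σ ^ 2 = k ^ 2 := by field_simp
  have e2 : k * σ * x / σ = k * x := by field_simp
  rw [e1, e2]
  have e3 : ∀ Y : ℝ, exp Y / (1 + k ^ 2 * x ^ 2) = exp (Y - log (1 + k ^ 2 * x ^ 2)) := by
    intro Y; rw [Real.exp_sub, Real.exp_log hg]
  rw [e3, ← Real.exp_add]
  congr 1
  field_simp
  ring

lemma gg_pos (k x : ℝ) : 0 < 1 + k ^ 2 * x ^ 2 := by positivity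

lemma RR_pos (k a θ t x : ℝ) : 0 < RR k a θ t x := div_pos (exp_pos _) (gg_pos k x)

lemma VV_neg (k a θ x : ℝ) : VV k a θ (-x) = VV k a θ x := by simp [VV]

lemma RR_neg (k a θ t x : ℝ) : RR k a θ t (-x) = RR k a θ t x := by simp [RR, VV_neg]

lemma VV_cont (k a θ : ℝ) : Continuous (VV k a θ) := by
  unfold VV
  refine Continuous.sub (Continuous.mul continuous_const (Continuous.log (by fun_prop) ?_)) (by fun_prop)
  intro x; exact (gg_pos k x).ne'

lemma RR_cont (k a θ t : ℝ) : Continuous (RR k a θ t) := by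
  unfold RR
  have := VV_cont k a θ
  refine Continuous.div (by fun_prop) (by fun_prop) ?_
  intro x; exact (gg_pos k x).ne'

lemma VV_deriv {k : ℝ} (hk : 0 < k) (a θ x : ℝ) :
    HasDerivAt (VV k a θ) (2 * ((a - θ) * x - x ^ 3) / (1 + k ^ 2 * x ^ 2)) x := by
  unfold VV
  have hg := gg_pos k x
  have h1 : HasDerivAt (fun x : ℝ => 1 + k ^ 2 * x ^ 2) (k ^ 2 * (2 * x)) x := by
    simpa using (((hasDerivAt_id x).pow 2).const_mul (k ^ 2)).const_add 1
  have h2 : HasDerivAt (fun x : ℝ => x ^ 2 / k ^ 2) (2 * x / k ^ 2) x := by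
    simpa using ((hasDerivAt_id x).pow 2).div_const (k ^ 2)
  have h3 := ((h1.log hg.ne').const_mul ((a - θ + 1 / k ^ 2) / k ^ 2)).sub h2
  refine h3.congr_deriv ?_
  field_simp
  ring

lemma VV_bound {k : ℝ} (hk : 0 < k) (a θ : ℝ) :
    ∃ C : ℝ, 0 ≤ C ∧ ∀ x, VV k a θ x ≤ C - 1 / (2 * k ^ 2) * x ^ 2 := by
  set c := (a - θ + 1 / k ^ 2) / k ^ 2 with hc
  set d := 1 / (2 * k ^ 4 * (|c| + 1)) with hd
  have hdpos : 0 < d := by positivity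
  refine ⟨|(|c| * (d - log d))|, abs_nonneg _, fun x => ?_⟩
  have hg := gg_pos k x
  have h1 : log (1 + k ^ 2 * x ^ 2) ≤ d * (1 + k ^ 2 * x ^ 2) - log d := by
    have := Real.log_le_sub_one_of_pos (mul_pos hdpos hg)
    rw [Real.log_mul hdpos.ne' hg.ne'] at this
    linarith
  have h2 : 0 ≤ log (1 + k ^ 2 * x ^ 2) := Real.log_nonneg (by nlinarith [sq_nonneg (k * x)])
  have h3 : c * log (1 + k ^ 2 * x ^ 2) ≤ |c| * (d * (1 + k ^ 2 * x ^ 2) - log d) :=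
    calc c * log (1 + k ^ 2 * x ^ 2) ≤ |c| * log (1 + k ^ 2 * x ^ 2) :=
          mul_le_mul_of_nonneg_right (le_abs_self c) h2
      _ ≤ _ := mul_le_mul_of_nonneg_left h1 (abs_nonneg c)
  have h4 : |c| * d * k ^ 2 ≤ 1 / (2 * k ^ 2) := by
    have hcp : 0 < |c| + 1 := by positivity
    have : |c| * d * k ^ 2 = |c| / (|c| + 1) * (1 / (2 * k ^ 2)) := by rw [hd]; field_simp
    rw [this]
    apply mul_le_of_le_one_left (by positivity)
    rw [div_le_one hcp]; linarith
  have h5 := le_abs_self (|c| * (d - log d))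
  have h6 := mul_le_mul_of_nonneg_right h4 (sq_nonneg x)
  have h7 : x ^ 2 / k ^ 2 = 2 * (1 / (2 * k ^ 2) * x ^ 2) := by field_simp
  unfold VV
  rw [← hc, h7]
  nlinarith

/-- Polynomial growth of degree at most four. -/
def Gr (h : ℝ → ℝ) : Prop := Continuous h ∧ ∃ K, 0 ≤ K ∧ ∀ x, |h x| ≤ K * (1 + x ^ 4)

lemma Gr.add {f g : ℝ → ℝ} (hf : Gr f) (hg : Gr g) : Gr (fun x => f x + g x) := by
  obtain ⟨cf, K, hK, bf⟩ := hf
  obtain ⟨cg, L, hL, bg⟩ := hg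
  refine ⟨cf.add cg, K + L, by positivity, fun x => ?_⟩
  have := abs_add_le (f x) (g x)
  have := bf x
  have := bg x
  nlinarith

lemma Gr.mulB {f g : ℝ → ℝ} (hf : Gr f) (cg : Continuous g) {M : ℝ} (hM : ∀ x, |g x| ≤ M) :
    Gr (fun x => f x * g x) := by
  obtain ⟨cf, K, hK, bf⟩ := hf
  have hM0 : 0 ≤ M := (abs_nonneg _).trans (hM 0)
  refine ⟨cf.mul cg, K * M, by positivity, fun x => ?_⟩
  rw [abs_mul]
  calc |f x| * |g x| ≤ (K * (1 + x ^ 4)) * M := mul_le_mul (bf x) (hM x) (abs_nonneg _) (by positivity)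
    _ = _ := by ring

lemma Gr.pow {n : ℕ} (hn : n ≤ 4) (c : ℝ) : Gr (fun x => c * x ^ n) := by
  refine ⟨by fun_prop, |c|, abs_nonneg _, fun x => ?_⟩
  rw [abs_mul, abs_pow]
  apply mul_le_mul_of_nonneg_left _ (abs_nonneg c)
  have e : x ^ 4 = |x| ^ 4 := by rw [← abs_pow, abs_of_nonneg (by positivity)]
  rw [e]
  rcases le_total |x| 1 with h | h
  · have := pow_le_one₀ (n := n) (abs_nonneg x) h
    have : 0 ≤ |x| ^ 4 := by positivity
    linarith
  · have := pow_le_pow_right₀ h hn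
    linarith

lemma Gr.congr {f g : ℝ → ℝ} (hf : Gr f) (h : ∀ x, g x = f x) : Gr g := by
  have : g = f := funext h
  rwa [this]

lemma Gr.abs {f : ℝ → ℝ} (hf : Gr f) : Gr (fun x => |f x|) := by
  obtain ⟨cf, K, hK, bf⟩ := hf
  exact ⟨cf.abs, K, hK, fun x => by rw [abs_abs]; exact bf x⟩

lemma Gr.of_le {f g : ℝ → ℝ} (hf : Gr f) (cg : Continuous g) (h : ∀ x, |g x| ≤ |f x|) : Gr g := by
  obtain ⟨cf, K, hK, bf⟩ := hf
  exact ⟨cg, K, hK, fun x => (h x).trans (bf x)⟩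

lemma Gr.int {h : ℝ → ℝ} (hh : Gr h) {k : ℝ} (hk : 0 < k) (a θ : ℝ) {t : ℝ} (ht : 0 < t) :
    Integrable (fun x => h x * RR k a θ t x) := by
  obtain ⟨ch, K, hK, bh⟩ := hh
  obtain ⟨C, hC, bV⟩ := VV_bound hk a θ
  set b := t * (1 / (2 * k ^ 2)) with hb
  have hbpos : 0 < b := by positivity
  have i1 : Integrable (fun x : ℝ => exp (-b * x ^ 2)) := integrable_exp_neg_mul_sq hbpos
  have i2 : Integrable (fun x : ℝ => x ^ 4 * exp (-b * x ^ 2)) := by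
    have := integrable_rpow_mul_exp_neg_mul_sq hbpos (s := 4) (by norm_num)
    refine this.congr (Eventually.of_forall fun x => ?_)
    simp only
    congr 1
    exact_mod_cast Real.rpow_natCast x 4
  refine Integrable.mono' ((i1.add i2).const_mul (K * exp (t * C)))
    (ch.mul (RR_cont k a θ t)).aestronglyMeasurable (Eventually.of_forall fun x => ?_)
  rw [Real.norm_eq_abs, abs_mul, abs_of_pos (RR_pos k a θ t x)]
  have h1 : RR k a θ t x ≤ exp (t * C) * exp (-b * x ^ 2) := by
    unfold RR
    rw [← Real.exp_add]
    calc exp (t * VV k a θ x) / (1 + k ^ 2 * x ^ 2) ≤ exp (t * VV k a θ x) :=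
          div_le_self (exp_pos _).le (by nlinarith [sq_nonneg (k * x)])
      _ ≤ _ := by
          apply Real.exp_le_exp.2
          have := mul_le_mul_of_nonneg_left (bV x) ht.le
          rw [hb]; linarith
  calc |h x| * RR k a θ t x ≤ (K * (1 + x ^ 4)) * (exp (t * C) * exp (-b * x ^ 2)) :=
        mul_le_mul (bh x) h1 (RR_pos k a θ t x).le (by positivity)
    _ = _ := by simp only [Pi.add_apply]; ring

lemma arctan_abs_le (y : ℝ) : |arctan y| ≤ π / 2 :=
  abs_le.2 ⟨(neg_pi_div_two_lt_arctan y).le, (arctan_lt_pi_div_two y).le⟩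

lemma exp_arctan_le (m y : ℝ) : |exp (m * arctan y)| ≤ exp (|m| * (π / 2)) := by
  rw [abs_of_pos (exp_pos _)]
  apply Real.exp_le_exp.2
  calc m * arctan y ≤ |m * arctan y| := le_abs_self _
    _ = |m| * |arctan y| := abs_mul _ _
    _ ≤ _ := mul_le_mul_of_nonneg_left (arctan_abs_le y) (abs_nonneg m)

lemma cont_at (k : ℝ) : Continuous (fun x : ℝ => arctan (k * x)) :=
  continuous_arctan.comp (by fun_prop)

lemma cont_exp_at (k m : ℝ) : Continuous (fun x : ℝ => exp (m * arctan (k * x))) := by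
  have := cont_at k
  fun_prop

lemma Gr.mulE {f : ℝ → ℝ} (hf : Gr f) (k m : ℝ) : Gr (fun x => f x * exp (m * arctan (k * x))) :=
  hf.mulB (cont_exp_at k m) (fun _ => exp_arctan_le m _)

lemma Gr.mulA {f : ℝ → ℝ} (hf : Gr f) (k : ℝ) : Gr (fun x => f x * arctan (k * x)) :=
  hf.mulB (cont_at k) (fun _ => arctan_abs_le _)

lemma Gr_one : Gr (fun _ => 1) := (Gr.pow (n := 0) (by norm_num) 1).congr (fun x => by simp)

lemma Gr_q (a : ℝ) : Gr (fun x => x * (a - x ^ 2)) :=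
  ((Gr.pow (n := 1) (by norm_num) a).add (Gr.pow (n := 3) (by norm_num) (-1))).congr (fun x => by ring)

lemma Gr_x : Gr (fun x => x) := (Gr.pow (n := 1) (by norm_num) 1).congr (fun x => by simp)

lemma Gr_g (k : ℝ) : Gr (fun x => 1 + k ^ 2 * x ^ 2) :=
  Gr_one.add (Gr.pow (n := 2) (by norm_num) (k ^ 2))

/-! ### Integration by parts and the derivative at zero -/

lemma param_deriv {h : ℝ → ℝ} (hh : Gr h) {k : ℝ} (hk : 0 < k) (a θ : ℝ) {t : ℝ} (ht : 0 < t) (m : ℝ) :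
    HasDerivAt (fun m => ∫ x, h x * exp (m * arctan (k * x)) * RR k a θ t x)
      (∫ x, h x * arctan (k * x) * exp (m * arctan (k * x)) * RR k a θ t x) m := by
  have hA := hh.mulA k
  have hb : Gr (fun x => |h x * arctan (k * x)| * exp ((|m| + 1) * (π / 2))) :=
    hA.abs.mulB continuous_const (fun _ => le_rfl)
  refine (hasDerivAt_integral_of_dominated_loc_of_deriv_le (s := Metric.ball m 1)
    (F' := fun m x => h x * arctan (k * x) * exp (m * arctan (k * x)) * RR k a θ t x)
    (bound := fun x => |h x * arctan (k * x)| * exp ((|m| + 1) * (π / 2)) * RR k a θ t x)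
    (Metric.ball_mem_nhds m one_pos) ?_ ((hh.mulE k m).int hk a θ ht)
    ((hA.mulE k m).int hk a θ ht).aestronglyMeasurable ?_ (hb.int hk a θ ht) ?_).2
  · exact Eventually.of_forall fun n => ((hh.mulE k n).int hk a θ ht).aestronglyMeasurable
  · refine Eventually.of_forall fun x n hn => ?_
    rw [Real.norm_eq_abs, abs_mul, abs_mul, abs_of_pos (RR_pos k a θ t x)]
    have hn' : |n| ≤ |m| + 1 := by
      rw [Metric.mem_ball, Real.dist_eq] at hn
      have := abs_sub_abs_le_abs_sub n m
      linarith
    have h1 : |exp (n * arctan (k * x))| ≤ exp ((|m| + 1) * (π / 2)) :=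
      (exp_arctan_le n _).trans (Real.exp_le_exp.2
        (mul_le_mul_of_nonneg_right hn' (by positivity)))
    have := (RR_pos k a θ t x).le
    gcongr
  · refine Eventually.of_forall fun x n _ => ?_
    have h1 : HasDerivAt (fun n : ℝ => exp (n * arctan (k * x)))
        (exp (n * arctan (k * x)) * arctan (k * x)) n := by
      simpa using ((hasDerivAt_id n).mul_const (arctan (k * x))).exp
    refine ((h1.const_mul (h x)).mul_const (RR k a θ t x)).congr_deriv ?_
    ring

noncomputable def SS (k a θ t m : ℝ) : ℝ :=
  ∫ x, x * (a - x ^ 2) * sinh (m * arctan (k * x)) * RR k a θ t x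

noncomputable def HH (k a θ t : ℝ) : ℝ :=
  ∫ x, x * (a - x ^ 2) * arctan (k * x) * RR k a θ t x

noncomputable def NN (k a θ t m : ℝ) : ℝ :=
  ∫ x, x * (a - x ^ 2) * exp (m * arctan (k * x)) * RR k a θ t x

noncomputable def ZZ (k a θ t m : ℝ) : ℝ :=
  ∫ x, 1 * exp (m * arctan (k * x)) * RR k a θ t x

lemma Gr.mulS {f : ℝ → ℝ} (hf : Gr f) (k m : ℝ) : Gr (fun x => f x * sinh (m * arctan (k * x))) := by
  refine (((hf.mulE k m).mulB (g := fun _ => 1 / 2) continuous_const (fun _ => le_rfl)).add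
    ((hf.mulE k (-m)).mulB (g := fun _ => - 1 / 2) continuous_const (fun _ => le_rfl))).congr (fun x => ?_)
  rw [Real.sinh_eq, neg_mul]
  ring

lemma NN_eq_SS {k : ℝ} (hk : 0 < k) (a θ : ℝ) {t : ℝ} (ht : 0 < t) (m : ℝ) :
    NN k a θ t m = SS k a θ t m := by
  have e : NN k a θ t m = ∫ x, -(x * (a - x ^ 2) * exp (-m * arctan (k * x)) * RR k a θ t x) := by
    unfold NN
    rw [← integral_neg_eq_self]
    congr 1
    ext x
    rw [RR_neg, mul_neg k x, arctan_neg]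
    ring_nf
  have i1 := ((Gr_q a).mulE k m).int hk a θ ht
  have i2 : Integrable (fun x => -(x * (a - x ^ 2) * exp (-m * arctan (k * x)) * RR k a θ t x)) :=
    (((Gr_q a).mulE k (-m)).int hk a θ ht).neg
  have h2 : NN k a θ t m + NN k a θ t m = 2 * SS k a θ t m := by
    nth_rewrite 2 [e]
    unfold NN SS
    rw [← integral_add i1 i2, ← integral_const_mul]
    congr 1
    ext x
    rw [Real.sinh_eq, neg_mul]
    ring
  linarith

lemma ZZ_pos {k : ℝ} (hk : 0 < k) (a θ : ℝ) {t : ℝ} (ht : 0 < t) (m : ℝ) : 0 < ZZ k a θ t m := by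
  unfold ZZ
  have hi := (Gr_one.mulE k m).int hk a θ ht
  have hp : ∀ x, 0 < 1 * exp (m * arctan (k * x)) * RR k a θ t x := fun x =>
    mul_pos (by positivity) (RR_pos k a θ t x)
  have hc : Continuous (fun x => 1 * exp (m * arctan (k * x)) * RR k a θ t x) :=
    (Gr_one.mulE k m).1.mul (RR_cont k a θ t)
  exact integral_pos_of_integrable_nonneg_nonzero (x := 0) hc hi (fun x => (hp x).le) (hp 0).ne'

lemma at_deriv (k x : ℝ) : HasDerivAt (fun x => arctan (k * x)) (k / (1 + k ^ 2 * x ^ 2)) x := by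
  have h1 : HasDerivAt (fun x : ℝ => k * x) k x := by
    simpa using (hasDerivAt_id x).const_mul k
  refine h1.arctan.congr_deriv ?_
  rw [mul_pow]; ring

/-- First integration by parts. -/
lemma ibp1 {k : ℝ} (hk : 0 < k) (a θ : ℝ) {t : ℝ} (ht : 0 < t) (μ : ℝ) :
    θ * ∫ x, (x - μ) * exp (2 * θ * t / k * μ * arctan (k * x)) * RR k a θ t x
      = NN k a θ t (2 * θ * t / k * μ) := by
  set m := 2 * θ * t / k * μ with hm
  have gx : Gr (fun x => x - μ) :=
    (Gr_x.add (Gr.pow (n := 0) (by norm_num) (-μ))).congr (fun x => by simp; ring)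
  have g2 : Gr (fun x => 2 * t * (x * (a - x ^ 2)) + - (2 * t * θ) * (x - μ)) :=
    (((Gr_q a).mulB (g := fun _ => 2 * t) continuous_const (fun _ => le_rfl)).add
     (gx.mulB (g := fun _ => -(2 * t * θ)) continuous_const (fun _ => le_rfl))).congr (fun x => by ring)
  have hP : Integrable (fun x => exp (m * arctan (k * x)) * exp (t * VV k a θ x)) := by
    refine (((Gr_g k).mulE k m).int hk a θ ht).congr (Eventually.of_forall fun x => ?_)
    have := (gg_pos k x).ne'
    simp only [RR]
    field_simp
  have hd : ∀ x, HasDerivAt (fun x => exp (m * arctan (k * x)) * exp (t * VV k a θ x))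
      ((2 * t * (x * (a - x ^ 2)) + - (2 * t * θ) * (x - μ)) * exp (m * arctan (k * x)) * RR k a θ t x) x := by
    intro x
    have h1 := ((at_deriv k x).const_mul m).exp
    have h2 := ((VV_deriv hk a θ x).const_mul t).exp
    refine (h1.mul h2).congr_deriv ?_
    have := (gg_pos k x).ne'
    rw [hm]
    simp only [RR]
    field_simp
    ring
  have h0 := integral_eq_zero_of_hasDerivAt_of_integrable hd ((g2.mulE k m).int hk a θ ht) hP
  have i1 := ((Gr_q a).mulE k m).int hk a θ ht
  have i2 := (gx.mulE k m).int hk a θ ht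
  have h1 : ∫ x, (2 * t * (x * (a - x ^ 2)) + - (2 * t * θ) * (x - μ)) * exp (m * arctan (k * x)) * RR k a θ t x
      = 2 * t * NN k a θ t m - 2 * t * θ * ∫ x, (x - μ) * exp (m * arctan (k * x)) * RR k a θ t x := by
    unfold NN
    rw [← integral_const_mul, ← integral_const_mul, ← integral_sub (i1.const_mul _) (i2.const_mul _)]
    congr 1
    ext x
    ring
  rw [h1] at h0
  have : 2 * t * (NN k a θ t m - θ * ∫ x, (x - μ) * exp (m * arctan (k * x)) * RR k a θ t x) = 0 := by
    linarith
  rcases mul_eq_zero.1 this with h | h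
  · linarith
  · linarith

/-- Second integration by parts. -/
lemma ibp2 {k : ℝ} (hk : 0 < k) (a θ : ℝ) {t : ℝ} (ht : 0 < t) :
    2 * t * HH k a θ t = ∫ x, (2 * t * θ * (x * arctan (k * x)) - k) * RR k a θ t x := by
  have gA := (Gr_x.mulA k)
  have g1 : Gr (fun x => 2 * t * θ * (x * arctan (k * x)) - k) :=
    ((gA.mulB (g := fun _ => 2 * t * θ) continuous_const (fun _ => le_rfl)).add
      (Gr.pow (n := 0) (by norm_num) (-k))).congr (fun x => by simp; ring)
  have g0 := ((Gr_q a).mulA k)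
  have g2 : Gr (fun x => 2 * t * (x * (a - x ^ 2) * arctan (k * x))
      - (2 * t * θ * (x * arctan (k * x)) - k)) :=
    ((g0.mulB (g := fun _ => 2 * t) continuous_const (fun _ => le_rfl)).add
      (g1.mulB (g := fun _ => -1) continuous_const (fun _ => le_rfl))).congr (fun x => by ring)
  have hP : Integrable (fun x => arctan (k * x) * exp (t * VV k a θ x)) := by
    refine (((Gr_g k).mulA k).int hk a θ ht).congr (Eventually.of_forall fun x => ?_)
    have := (gg_pos k x).ne'
    simp only [RR]
    field_simp
  have hd : ∀ x, HasDerivAt (fun x => arctan (k * x) * exp (t * VV k a θ x))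
      ((2 * t * (x * (a - x ^ 2) * arctan (k * x))
      - (2 * t * θ * (x * arctan (k * x)) - k)) * RR k a θ t x) x := by
    intro x
    have h2 := ((VV_deriv hk a θ x).const_mul t).exp
    refine ((at_deriv k x).mul h2).congr_deriv ?_
    have := (gg_pos k x).ne'
    simp only [RR]
    field_simp
    ring
  have h0 := integral_eq_zero_of_hasDerivAt_of_integrable hd (g2.int hk a θ ht) hP
  have i1 := g0.int hk a θ ht
  have i2 := g1.int hk a θ ht
  have h1 : ∫ x, (2 * t * (x * (a - x ^ 2) * arctan (k * x))
      - (2 * t * θ * (x * arctan (k * x)) - k)) * RR k a θ t x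
      = 2 * t * HH k a θ t - ∫ x, (2 * t * θ * (x * arctan (k * x)) - k) * RR k a θ t x := by
    unfold HH
    rw [← integral_const_mul, ← integral_sub (i1.const_mul _) i2]
    congr 1
    ext x
    ring
  rw [h1] at h0
  linarith

lemma F_eq {k a θ σ : ℝ} (hk : 0 < k) (hθ : 0 < θ) (hσ : 0 < σ) (μ : ℝ) :
    F 1 σ (k * σ) a θ μ = SS k a θ (1 / σ ^ 2) (2 * θ * (1 / σ ^ 2) / k * μ)
      / (θ * ZZ k a θ (1 / σ ^ 2) (2 * θ * (1 / σ ^ 2) / k * μ)) := by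
  have ht : 0 < 1 / σ ^ 2 := by positivity
  rw [← NN_eq_SS hk a θ ht, ← ibp1 hk a θ ht μ]
  unfold F Z ZZ
  rw [mul_div_mul_left _ _ hθ.ne']
  simp only [rho0_eq hk hσ, one_mul, mul_assoc]

lemma NN_deriv {k : ℝ} (hk : 0 < k) (a θ : ℝ) {t : ℝ} (ht : 0 < t) (m : ℝ) :
    ∃ d, HasDerivAt (NN k a θ t) d m ∧ (m = 0 → d = HH k a θ t) := by
  refine ⟨_, param_deriv (Gr_q a) hk a θ ht m, ?_⟩
  rintro rfl
  simp [HH]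

lemma SS_deriv {k : ℝ} (hk : 0 < k) (a θ : ℝ) {t : ℝ} (ht : 0 < t) (m : ℝ) :
    ∃ d, HasDerivAt (SS k a θ t) d m ∧ (m = 0 → d = HH k a θ t) := by
  have : NN k a θ t = SS k a θ t := funext (NN_eq_SS hk a θ ht)
  rw [← this]; exact NN_deriv hk a θ ht m

lemma SS_zero (k a θ t : ℝ) : SS k a θ t 0 = 0 := by simp [SS]

lemma SS_odd (k a θ t m : ℝ) : SS k a θ t (-m) = - SS k a θ t m := by
  unfold SS
  rw [← integral_neg]
  congr 1
  ext x
  rw [neg_mul m, Real.sinh_neg]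
  ring

lemma Fmu_eq {k a θ σ : ℝ} (hk : 0 < k) (hθ : 0 < θ) (hσ : 0 < σ) :
    0 < Fmu' 1 σ (k * σ) a θ ↔ 0 < HH k a θ (1 / σ ^ 2) := by
  have ht : 0 < 1 / σ ^ 2 := by positivity
  set t := 1 / σ ^ 2 with htdef
  set β := 2 * θ * t / k with hβ
  have hβp : 0 < β := by positivity
  obtain ⟨d, hd, hd0⟩ := SS_deriv hk a θ ht 0
  have hd0 := hd0 rfl
  have hZ : HasDerivAt (ZZ k a θ t) _ 0 := param_deriv Gr_one hk a θ ht 0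
  have hlin : HasDerivAt (fun μ : ℝ => β * μ) β 0 := by
    simpa using (hasDerivAt_id (0 : ℝ)).const_mul β
  have e0 : β * 0 = 0 := mul_zero _
  have hS' : HasDerivAt (fun μ => SS k a θ t (β * μ)) (d * β) 0 :=
    HasDerivAt.comp (h₂ := SS k a θ t) 0 (by rw [e0]; exact hd) hlin
  have hZ' := (HasDerivAt.comp (h₂ := ZZ k a θ t) 0 (by rw [e0]; exact hZ) hlin).const_mul θ
  have hZp := ZZ_pos hk a θ ht 0
  have hq := hS'.div hZ' (by simp only [Function.comp, e0]; positivity)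
  have hF : (fun μ => F 1 σ (k * σ) a θ μ) = (fun μ => SS k a θ t (β * μ)) / (fun μ => θ * (ZZ k a θ t ∘ fun μ => β * μ) μ) := by
    ext μ
    rw [F_eq hk hθ hσ μ]
    rfl
  unfold Fmu'
  rw [hF, hq.deriv]
  simp only [Function.comp, e0, SS_zero, zero_mul, sub_zero, hd0]
  constructor
  · intro h
    by_contra hc
    push Not at hc
    have : HH k a θ t * β * (θ * ZZ k a θ t 0) / (θ * ZZ k a θ t 0) ^ 2 ≤ 0 := by
      apply div_nonpos_of_nonpos_of_nonneg _ (by positivity)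
      have : 0 ≤ β * (θ * ZZ k a θ t 0) := by positivity
      nlinarith
    linarith
  · intro h
    positivity

/-! ### Zeros of the self-consistency function for fixed noise -/

lemma SS_gen {k a : ℝ} (hk : 0 < k) (ha : 0 < a) (θ : ℝ) (t : ℝ) (G : ℝ → ℝ)
    (hodd : ∀ y, G (-y) = - G y) (hpos : ∀ y, 0 < y → y < arctan (k * √a) → 0 < G y)
    (hneg : ∀ y, arctan (k * √a) < y → G y ≤ 0) (hc : Continuous G)
    (hi : Integrable (fun x => x * (a - x ^ 2) * G (arctan (k * x)) * RR k a θ t x)) :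
    0 < ∫ x, x * (a - x ^ 2) * G (arctan (k * x)) * RR k a θ t x := by
  have hsa : 0 < √a := Real.sqrt_pos.2 ha
  have hsq : √a ^ 2 = a := Real.sq_sqrt ha.le
  have hcont : Continuous (fun x => x * (a - x ^ 2) * G (arctan (k * x)) * RR k a θ t x) := by
    have h1 := RR_cont k a θ t
    have h2 := hc.comp (cont_at k)
    simp only [Function.comp_def] at h2
    fun_prop
  have hin : ∀ x, 0 < x → x < √a → 0 < x * (a - x ^ 2) * G (arctan (k * x)) := by
    intro x hx hxa
    have h1 : 0 < arctan (k * x) := by rw [Real.arctan_pos]; positivity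
    have h2 : arctan (k * x) < arctan (k * √a) := arctan_strictMono (by gcongr)
    have h3 := hpos _ h1 h2
    have h4 : 0 < a - x ^ 2 := by nlinarith
    positivity
  have hP : ∀ x, 0 < x → 0 ≤ x * (a - x ^ 2) * G (arctan (k * x)) := by
    intro x hx
    rcases lt_trichotomy x (√a) with h | h | h
    · exact (hin x hx h).le
    · rw [h, hsq]; simp
    · have h2 : arctan (k * √a) < arctan (k * x) := arctan_strictMono (by gcongr)
      have h3 := hneg _ h2
      have h4 : a - x ^ 2 ≤ 0 := by nlinarith
      have := mul_nonneg_of_nonpos_of_nonpos h4 h3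
      nlinarith
  have hA : ∀ x, 0 ≤ x * (a - x ^ 2) * G (arctan (k * x)) := by
    intro x
    rcases lt_trichotomy x 0 with h | h | h
    · have := hP (-x) (by linarith)
      rw [mul_neg k x, arctan_neg, hodd] at this
      nlinarith
    · rw [h]; simp
    · exact hP x h
  refine integral_pos_of_integrable_nonneg_nonzero (x := √a / 2) hcont hi
    (fun x => mul_nonneg (hA x) (RR_pos k a θ t x).le) ?_
  exact (mul_pos (hin _ (by positivity) (by linarith)) (RR_pos k a θ t _)).ne'

lemma A0_pos {k a : ℝ} (hk : 0 < k) (ha : 0 < a) : 0 < arctan (k * √a) := by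
  rw [Real.arctan_pos]; have := Real.sqrt_pos.2 ha; positivity

lemma SS_ratio {k a : ℝ} (hk : 0 < k) (ha : 0 < a) (θ : ℝ) {t : ℝ} (ht : 0 < t) {m1 m2 : ℝ}
    (hm1 : 0 < m1) (hm : m1 < m2) :
    SS k a θ t m2 * sinh (m1 * arctan (k * √a)) < SS k a θ t m1 * sinh (m2 * arctan (k * √a)) := by
  set A0 := arctan (k * √a) with hA0
  have hA0p : 0 < A0 := A0_pos hk ha
  have i1 := ((Gr_q a).mulS k m1).int hk a θ ht
  have i2 := ((Gr_q a).mulS k m2).int hk a θ ht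
  have e : ∀ x, x * (a - x ^ 2) * (sinh (m1 * arctan (k * x)) * sinh (m2 * A0)
      - sinh (m2 * arctan (k * x)) * sinh (m1 * A0)) * RR k a θ t x
      = sinh (m2 * A0) * (x * (a - x ^ 2) * sinh (m1 * arctan (k * x)) * RR k a θ t x)
      - sinh (m1 * A0) * (x * (a - x ^ 2) * sinh (m2 * arctan (k * x)) * RR k a θ t x) := by
    intro x; ring
  have h := SS_gen hk ha θ t (fun y => sinh (m1 * y) * sinh (m2 * A0) - sinh (m2 * y) * sinh (m1 * A0))
    (by intro y; simp only [mul_neg, Real.sinh_neg]; ring)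
    (by intro y hy hyA
        have := aux_sinh_ratio hy hyA hm1 hm
        linarith)
    (by intro y hyA
        have := aux_sinh_ratio hA0p hyA hm1 hm
        linarith)
    (by have := Real.continuous_sinh; fun_prop)
    (by simp only [e]; exact (i1.const_mul _).sub (i2.const_mul _))
  simp only [e] at h
  rw [integral_sub (i1.const_mul _) (i2.const_mul _), integral_const_mul, integral_const_mul] at h
  unfold SS
  linarith

lemma SS_lt_HH {k a : ℝ} (hk : 0 < k) (ha : 0 < a) (θ : ℝ) {t : ℝ} (ht : 0 < t) {m : ℝ}
    (hm : 0 < m) :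
    SS k a θ t m * arctan (k * √a) < HH k a θ t * sinh (m * arctan (k * √a)) := by
  set A0 := arctan (k * √a) with hA0
  have hA0p : 0 < A0 := A0_pos hk ha
  have i1 := ((Gr_q a).mulA k).int hk a θ ht
  have i2 := ((Gr_q a).mulS k m).int hk a θ ht
  have e : ∀ x, x * (a - x ^ 2) * (arctan (k * x) * sinh (m * A0)
      - sinh (m * arctan (k * x)) * A0) * RR k a θ t x
      = sinh (m * A0) * (x * (a - x ^ 2) * arctan (k * x) * RR k a θ t x)
      - A0 * (x * (a - x ^ 2) * sinh (m * arctan (k * x)) * RR k a θ t x) := by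
    intro x; ring
  have h := SS_gen hk ha θ t (fun y => y * sinh (m * A0) - sinh (m * y) * A0)
    (by intro y; simp only [mul_neg, Real.sinh_neg]; ring)
    (by intro y hy hyA
        have := aux_sinh_lt (p := m * y) (q := m * A0) (by positivity) (by gcongr)
        have : m * (A0 * sinh (m * y)) < m * (y * sinh (m * A0)) := by linarith
        have := lt_of_mul_lt_mul_left this hm.le
        linarith)
    (by intro y hyA
        have := aux_sinh_lt (p := m * A0) (q := m * y) (by positivity) (by gcongr)
        have : m * (y * sinh (m * A0)) < m * (A0 * sinh (m * y)) := by linarith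
        have := lt_of_mul_lt_mul_left this hm.le
        linarith)
    (by have := Real.continuous_sinh; fun_prop)
    (by simp only [e]; exact (i1.const_mul _).sub (i2.const_mul _))
  simp only [e] at h
  rw [integral_sub (i1.const_mul _) (i2.const_mul _), integral_const_mul, integral_const_mul] at h
  unfold SS HH
  linarith

lemma SS_exists_neg {k a : ℝ} (hk : 0 < k) (ha : 0 < a) (θ : ℝ) {t : ℝ} (ht : 0 < t) :
    ∃ m, 0 < m ∧ SS k a θ t m < 0 := by
  set A0 := arctan (k * √a) with hA0
  have hA0p : 0 < A0 := A0_pos hk ha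
  have hsa : 0 < √a := Real.sqrt_pos.2 ha
  have hsq : √a ^ 2 = a := Real.sq_sqrt ha.le
  set q : ℝ → ℝ := fun x => max (arctan (k * |x|) - A0) 0 with hq
  have qc : Continuous q := by
    have h := (cont_at k).comp continuous_abs
    simp only [Function.comp_def] at h
    exact (h.sub continuous_const).max continuous_const
  have q0 : ∀ x, 0 ≤ q x := fun x => le_max_right _ _
  have qb : ∀ x, |q x| ≤ π / 2 := by
    intro x
    rw [abs_of_nonneg (q0 x)]
    apply max_le _ (by positivity)
    have := (arctan_lt_pi_div_two (k * |x|)).le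
    linarith
  have g1 := (Gr_q a).abs
  have i1 := g1.int hk a θ ht
  have i2 := (g1.mulB qc qb).int hk a θ ht
  set I := ∫ x, |x * (a - x ^ 2)| * RR k a θ t x with hI
  set J := ∫ x, |x * (a - x ^ 2)| * q x * RR k a θ t x with hJ
  have hJp : 0 < J := by
    refine integral_pos_of_integrable_nonneg_nonzero (x := √a + 1)
      ((g1.mulB qc qb).1.mul (RR_cont k a θ t)) i2
      (fun x => mul_nonneg (mul_nonneg (abs_nonneg _) (q0 x)) (RR_pos k a θ t x).le) ?_
    have h1 : 0 < q (√a + 1) := by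
      apply lt_max_of_lt_left
      rw [sub_pos, abs_of_pos (by positivity)]
      exact arctan_strictMono (by gcongr; linarith)
    have h2 : (√a + 1) * (a - (√a + 1) ^ 2) ≠ 0 := by
      apply mul_ne_zero (by positivity)
      nlinarith
    exact mul_ne_zero (mul_ne_zero (abs_ne_zero.2 h2) h1.ne') (RR_pos k a θ t _).ne'
  have hI0 : 0 ≤ I := integral_nonneg fun x => mul_nonneg (abs_nonneg _) (RR_pos k a θ t x).le
  have main : ∀ m, 0 < m → SS k a θ t m ≤ sinh (m * A0) * (I - m * J) := by
    intro m hm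
    have hs0 : 0 < sinh (m * A0) := Real.sinh_pos_iff.2 (by positivity)
    have hsub := (i1.sub (i2.const_mul m)).const_mul (sinh (m * A0))
    rw [hI, hJ, ← integral_const_mul, ← integral_sub i1 (i2.const_mul m), ← integral_const_mul]
    unfold SS
    refine integral_mono (((Gr_q a).mulS k m).int hk a θ ht) hsub fun x => ?_
    have hR := RR_pos k a θ t x
    have hP : ∀ y, 0 ≤ y → y * (a - y ^ 2) * sinh (m * arctan (k * y)) ≤
        sinh (m * A0) * (|y * (a - y ^ 2)| * (1 - m * q y)) := by
      intro y hy
      have hqy : q y = max (arctan (k * y) - A0) 0 := by simp only [hq, abs_of_nonneg hy]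
      rcases le_total y (√a) with h | h
      · have h2 : arctan (k * y) ≤ A0 := arctan_strictMono.monotone (by gcongr)
        rw [hqy, max_eq_right (by linarith)]
        have h3 : 0 ≤ a - y ^ 2 := by nlinarith
        rw [abs_of_nonneg (by positivity)]
        have : sinh (m * arctan (k * y)) ≤ sinh (m * A0) := by
          rw [Real.sinh_le_sinh]; gcongr
        have := mul_le_mul_of_nonneg_left this (mul_nonneg hy h3)
        linarith
      · have h2 : A0 ≤ arctan (k * y) := arctan_strictMono.monotone (by gcongr)
        rw [hqy, max_eq_left (by linarith)]
        have h3 : a - y ^ 2 ≤ 0 := by nlinarith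
        have h5 : 0 ≤ - (y * (a - y ^ 2)) := by nlinarith
        rw [abs_of_nonpos (by linarith)]
        have h4 := aux_sinh_add (p := m * A0) (q := m * (arctan (k * y) - A0)) (by positivity)
          (mul_nonneg hm.le (by linarith))
        rw [show m * A0 + m * (arctan (k * y) - A0) = m * arctan (k * y) by ring] at h4
        have h6 := mul_le_mul_of_nonneg_left h4 h5
        have h7 := mul_nonneg h5 hs0.le
        nlinarith
    have hA : x * (a - x ^ 2) * sinh (m * arctan (k * x)) ≤
        sinh (m * A0) * (|x * (a - x ^ 2)| * (1 - m * q x)) := by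
      rcases le_total 0 x with h | h
      · exact hP x h
      · have := hP (-x) (by linarith)
        have e1 : q (-x) = q x := by simp [hq]
        have e2 : |(-x) * (a - (-x) ^ 2)| = |x * (a - x ^ 2)| := by
          rw [neg_sq, neg_mul, abs_neg]
        rw [e1, e2, mul_neg k x, arctan_neg, mul_neg m, Real.sinh_neg] at this
        nlinarith
    have := mul_le_mul_of_nonneg_right hA hR.le
    linarith
  refine ⟨(I + 1) / J, by positivity, ?_⟩
  have h := main ((I + 1) / J) (by positivity)
  rw [div_mul_cancel₀ _ hJp.ne'] at h
  have hs0 : 0 < sinh ((I + 1) / J * A0) := Real.sinh_pos_iff.2 (by positivity)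
  linarith

lemma SS_exists_pos {k a : ℝ} (hk : 0 < k) (θ : ℝ) {t : ℝ} (ht : 0 < t)
    (hH : 0 < HH k a θ t) : ∃ m, 0 < m ∧ 0 < SS k a θ t m := by
  obtain ⟨d, hd, hd0⟩ := SS_deriv hk a θ ht 0
  rw [hd0 rfl] at hd
  have h1 := (hasDerivAt_iff_tendsto_slope.1 hd).eventually (lt_mem_nhds hH)
  have h2 : ∀ᶠ m in nhdsWithin (0 : ℝ) (Ioi 0), 0 < slope (SS k a θ t) 0 m :=
    h1.filter_mono (nhdsWithin_mono _ (fun x hx => (ne_of_gt hx)))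
  obtain ⟨m, hm, hm0⟩ := (h2.and self_mem_nhdsWithin).exists
  have hm0 : 0 < m := hm0
  refine ⟨m, hm0, ?_⟩
  rw [slope_def_field, SS_zero, sub_zero, sub_zero] at hm
  have := mul_pos hm hm0
  rwa [div_mul_cancel₀ _ hm0.ne'] at this

lemma F_zero_iff {k a θ σ : ℝ} (hk : 0 < k) (hθ : 0 < θ) (hσ : 0 < σ) (μ : ℝ) :
    F 1 σ (k * σ) a θ μ = 0 ↔ SS k a θ (1 / σ ^ 2) (2 * θ * (1 / σ ^ 2) / k * μ) = 0 := by
  have ht : 0 < 1 / σ ^ 2 := by positivity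
  rw [F_eq hk hθ hσ μ, div_eq_zero_iff]
  have := ZZ_pos hk a θ ht (2 * θ * (1 / σ ^ 2) / k * μ)
  constructor
  · rintro (h | h)
    · exact h
    · have : 0 < θ * ZZ k a θ (1 / σ ^ 2) (2 * θ * (1 / σ ^ 2) / k * μ) := by positivity
      linarith
  · exact Or.inl

lemma ncard_one {k a θ σ : ℝ} (hk : 0 < k) (ha : 0 < a) (hθ : 0 < θ) (hσ : 0 < σ)
    (hH : ¬ 0 < HH k a θ (1 / σ ^ 2)) : {μ : ℝ | F 1 σ (k * σ) a θ μ = 0}.ncard = 1 := by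
  have ht : 0 < 1 / σ ^ 2 := by positivity
  simp only [F_zero_iff hk hθ hσ]
  set t := 1 / σ ^ 2
  have hβp : 0 < 2 * θ * t / k := by positivity
  set β := 2 * θ * t / k
  push Not at hH
  have hneg : ∀ m, 0 < m → SS k a θ t m < 0 := by
    intro m hm
    have h1 := SS_lt_HH hk ha θ ht hm
    have hA := A0_pos hk ha
    have hs : 0 < sinh (m * arctan (k * √a)) := Real.sinh_pos_iff.2 (by positivity)
    by_contra hc
    push Not at hc
    have := mul_nonneg hc hA.le
    have := mul_nonpos_of_nonpos_of_nonneg hH hs.le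
    linarith
  rw [Set.ncard_eq_one]
  refine ⟨0, ?_⟩
  ext μ
  simp only [mem_ofPred_eq, mem_singleton_iff]
  constructor
  · intro h
    by_contra hc
    rcases lt_or_gt_of_ne hc with h0 | h0
    · have := hneg (β * (-μ)) (mul_pos hβp (by linarith))
      rw [mul_neg, SS_odd] at this
      linarith
    · have := hneg (β * μ) (mul_pos hβp h0)
      linarith
  · rintro rfl
    rw [mul_zero, SS_zero]

lemma ncard_three {k a θ σ : ℝ} (hk : 0 < k) (ha : 0 < a) (hθ : 0 < θ) (hσ : 0 < σ)
    (hH : 0 < HH k a θ (1 / σ ^ 2)) : {μ : ℝ | F 1 σ (k * σ) a θ μ = 0}.ncard = 3 := by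
  have ht : 0 < 1 / σ ^ 2 := by positivity
  simp only [F_zero_iff hk hθ hσ]
  set t := 1 / σ ^ 2
  have hβp : 0 < 2 * θ * t / k := by positivity
  set β := 2 * θ * t / k
  have hA := A0_pos hk ha
  have hs : ∀ m, 0 < m → 0 < sinh (m * arctan (k * √a)) := fun m hm =>
    Real.sinh_pos_iff.2 (by positivity)
  have hmono : ∀ m1 m2, 0 < m1 → m1 < m2 → SS k a θ t m1 ≤ 0 → SS k a θ t m2 < 0 := by
    intro m1 m2 h1 h12 hS
    have h := SS_ratio hk ha θ ht h1 h12
    by_contra hc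
    push Not at hc
    have := mul_nonneg hc (hs m1 h1).le
    have := mul_nonpos_of_nonpos_of_nonneg hS (hs m2 (h1.trans h12)).le
    linarith
  obtain ⟨m1, hm1, hS1⟩ := SS_exists_pos hk θ ht hH
  obtain ⟨m2, hm2, hS2⟩ := SS_exists_neg hk ha θ ht
  have h12 : m1 < m2 := by
    by_contra hc
    push Not at hc
    rcases hc.lt_or_eq with h | h
    · have := hmono m2 m1 hm2 h hS2.le
      linarith
    · rw [h] at hS2; linarith
  have hcont : ContinuousOn (SS k a θ t) (Icc m1 m2) := by
    intro m _
    obtain ⟨d, hd, _⟩ := SS_deriv hk a θ ht m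
    exact hd.continuousAt.continuousWithinAt
  obtain ⟨m, hm, hSm⟩ := intermediate_value_Icc' h12.le hcont ⟨hS2.le, hS1.le⟩
  have hmp : 0 < m := lt_of_lt_of_le hm1 hm.1
  have huniq : ∀ n, 0 < n → SS k a θ t n = 0 → n = m := by
    intro n hn hSn
    rcases lt_trichotomy n m with h | h | h
    · have := hmono n m hn h hSn.le
      linarith
    · exact h
    · have := hmono m n hmp h hSm.le
      linarith
  rw [Set.ncard_eq_three]
  have hmβ : 0 < m / β := by positivity
  refine ⟨-(m / β), 0, m / β, by linarith, by linarith, by linarith, ?_⟩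
  have e : β * (m / β) = m := by field_simp
  ext μ
  simp only [mem_ofPred_eq, mem_insert_iff, mem_singleton_iff]
  constructor
  · intro h
    rcases lt_trichotomy μ 0 with h0 | h0 | h0
    · left
      have := huniq (β * (-μ)) (mul_pos hβp (by linarith)) (by rw [mul_neg, SS_odd, h, neg_zero])
      rw [← this]; field_simp
    · right; left; exact h0
    · right; right
      have := huniq (β * μ) (mul_pos hβp h0) h
      rw [← this]; field_simp
  · rintro (h | h | h)
    · rw [h, mul_neg, SS_odd, e, hSm, neg_zero]
    · rw [h, mul_zero, SS_zero]
    · rw [h, e, hSm]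

/-! ### Dependence on the noise strength -/

lemma VV_anti {k : ℝ} (hk : 0 < k) (a θ : ℝ) {x y : ℝ} (h1 : a - θ ≤ x ^ 2) (h2 : x ^ 2 < y ^ 2) :
    VV k a θ y < VV k a θ x := by
  unfold VV
  have hx := gg_pos k x
  have hy := gg_pos k y
  have hlt : 1 + k ^ 2 * x ^ 2 < 1 + k ^ 2 * y ^ 2 := by
    have : 0 < k ^ 2 := by positivity
    nlinarith
  set c := (a - θ + 1 / k ^ 2) / k ^ 2 with hc
  have hL : 0 < log (1 + k ^ 2 * y ^ 2) - log (1 + k ^ 2 * x ^ 2) := by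
    rw [sub_pos]; exact Real.log_lt_log hx hlt
  have hdiv : 0 < (y ^ 2 - x ^ 2) / k ^ 2 := div_pos (by linarith) (by positivity)
  have key : c * (log (1 + k ^ 2 * y ^ 2) - log (1 + k ^ 2 * x ^ 2)) < (y ^ 2 - x ^ 2) / k ^ 2 := by
    rcases le_or_gt c 0 with hc0 | hc0
    · exact lt_of_le_of_lt (mul_nonpos_of_nonpos_of_nonneg hc0 hL.le) hdiv
    · have h3 : log (1 + k ^ 2 * y ^ 2) - log (1 + k ^ 2 * x ^ 2)
          < (1 + k ^ 2 * y ^ 2) / (1 + k ^ 2 * x ^ 2) - 1 := by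
        rw [← Real.log_div hy.ne' hx.ne']
        apply Real.log_lt_sub_one_of_pos (by positivity)
        rw [Ne, div_eq_one_iff_eq hx.ne']
        exact hlt.ne'
      have h4 : (1 + k ^ 2 * y ^ 2) / (1 + k ^ 2 * x ^ 2) - 1
          = k ^ 2 * (y ^ 2 - x ^ 2) / (1 + k ^ 2 * x ^ 2) := by
        field_simp; ring
      have h5 : c ≤ (1 + k ^ 2 * x ^ 2) / k ^ 4 := by
        have : (1 + k ^ 2 * x ^ 2) / k ^ 4 = (x ^ 2 + 1 / k ^ 2) / k ^ 2 := by field_simp; ring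
        rw [this, hc]
        gcongr
      calc c * (log (1 + k ^ 2 * y ^ 2) - log (1 + k ^ 2 * x ^ 2))
          < c * (k ^ 2 * (y ^ 2 - x ^ 2) / (1 + k ^ 2 * x ^ 2)) := by
            rw [← h4]; gcongr
        _ ≤ (1 + k ^ 2 * x ^ 2) / k ^ 4 * (k ^ 2 * (y ^ 2 - x ^ 2) / (1 + k ^ 2 * x ^ 2)) := by
            apply mul_le_mul_of_nonneg_right h5
            apply div_nonneg _ hx.le
            apply mul_nonneg (by positivity) (by linarith)
        _ = (y ^ 2 - x ^ 2) / k ^ 2 := by field_simp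
  have : (y ^ 2 - x ^ 2) / k ^ 2 = y ^ 2 / k ^ 2 - x ^ 2 / k ^ 2 := sub_div _ _ _
  linarith

lemma xA_nonneg {k : ℝ} (hk : 0 < k) (x : ℝ) : 0 ≤ x * arctan (k * x) := by
  rcases le_total 0 x with h | h
  · have : 0 ≤ arctan (k * x) := by rw [Real.arctan_nonneg]; positivity
    positivity
  · have : arctan (k * x) ≤ 0 := by
      rw [← Real.arctan_zero]; exact arctan_strictMono.monotone (by nlinarith)
    nlinarith

lemma RR_shift (k a θ t V0 x : ℝ) :
    exp (-(t * V0)) * RR k a θ t x = exp (t * (VV k a θ x - V0)) / (1 + k ^ 2 * x ^ 2) := by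
  unfold RR
  rw [← mul_div_assoc, ← Real.exp_add]
  congr 2
  ring

/-- Monotonicity when `a ≤ θ`. -/
lemma HH_up1 {k a θ : ℝ} (hk : 0 < k) (ha : 0 < a) (haθ : a ≤ θ) {t1 t2 : ℝ} (ht1 : 0 < t1)
    (h12 : t1 < t2) (hH : 0 < HH k a θ t1) : 0 < HH k a θ t2 := by
  have ht2 := ht1.trans h12
  have hsq : √a ^ 2 = a := Real.sq_sqrt ha.le
  set V0 := VV k a θ (√a) with hV0
  have i1 := ((Gr_q a).mulA k).int hk a θ ht1
  have i2 := ((Gr_q a).mulA k).int hk a θ ht2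
  have h : exp (-(t1 * V0)) * HH k a θ t1 ≤ exp (-(t2 * V0)) * HH k a θ t2 := by
    unfold HH
    rw [← integral_const_mul, ← integral_const_mul]
    refine integral_mono (i1.const_mul _) (i2.const_mul _) fun x => ?_
    have e : ∀ t, exp (-(t * V0)) * (x * (a - x ^ 2) * arctan (k * x) * RR k a θ t x)
        = (x * arctan (k * x)) * ((a - x ^ 2) * (exp (t * (VV k a θ x - V0)))) / (1 + k ^ 2 * x ^ 2) := by
      intro t
      calc _ = x * (a - x ^ 2) * arctan (k * x) * (exp (-(t * V0)) * RR k a θ t x) := by ring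
        _ = _ := by rw [RR_shift]; ring
    simp only [e]
    apply div_le_div_of_nonneg_right _ (gg_pos k x).le
    apply mul_le_mul_of_nonneg_left _ (xA_nonneg hk x)
    rcases lt_trichotomy (x ^ 2) a with hx | hx | hx
    · have : V0 < VV k a θ x := VV_anti hk a θ (by nlinarith [sq_nonneg x]) (by rw [hsq]; exact hx)
      apply mul_le_mul_of_nonneg_left _ (by linarith)
      apply Real.exp_le_exp.2
      nlinarith
    · rw [hx]; simp
    · have : VV k a θ x < V0 := VV_anti hk a θ (by rw [hsq]; nlinarith) (by rw [hsq]; exact hx)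
      apply mul_le_mul_of_nonpos_left _ (by linarith)
      apply Real.exp_le_exp.2
      nlinarith
  have h1 : 0 < exp (-(t1 * V0)) * HH k a θ t1 := mul_pos (exp_pos _) hH
  exact pos_of_mul_pos_right (lt_of_lt_of_le h1 h) (exp_pos _).le

/-- Monotonicity when `θ < a`, by rescaling. -/
lemma HH_up2 {k a θ : ℝ} (hk : 0 < k) (hθ : 0 < θ) (haθ : θ < a) {t1 t2 : ℝ} (ht1 : 0 < t1)
    (h12 : t1 < t2) (hH : 0 < HH k a θ t1) : 0 < HH k a θ t2 := by
  have ht2 := ht1.trans h12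
  set D : ℝ → ℝ → ℝ := fun t x => 2 * t * θ * (x * arctan (k * x)) - k with hD
  have gD : ∀ t, Gr (D t) := fun t =>
    (((Gr_x.mulA k).mulB (g := fun _ => 2 * t * θ) continuous_const (fun _ => le_rfl)).add
      (Gr.pow (n := 0) (by norm_num) (-k))).congr (fun x => by simp only [hD]; ring)
  have hI1 : 0 < ∫ x, D t1 x * RR k a θ t1 x := by
    rw [← ibp2 hk a θ ht1]; positivity
  suffices hI2 : 0 < ∫ x, D t2 x * RR k a θ t2 x by
    rw [← ibp2 hk a θ ht2] at hI2
    exact pos_of_mul_pos_right hI2 (by positivity)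
  have hDeven : ∀ t x, D t (-x) = D t x := by
    intro t x; simp only [hD]; rw [mul_neg k x, arctan_neg]; ring
  have hDabs : ∀ t x, D t |x| = D t x := by
    intro t x
    rcases abs_choice x with h | h <;> rw [h]
    exact hDeven t x
  have hDmono : ∀ x y, 0 ≤ x → x ≤ y → D t1 x ≤ D t1 y := by
    intro x y hx hxy
    have h1 : 0 ≤ arctan (k * x) := by rw [Real.arctan_nonneg]; positivity
    have h2 : arctan (k * x) ≤ arctan (k * y) := arctan_strictMono.monotone (by gcongr)
    have h3 : x * arctan (k * x) ≤ y * arctan (k * y) :=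
      mul_le_mul hxy h2 h1 (hx.trans hxy)
    simp only [hD]
    gcongr
  -- the crossing point
  obtain ⟨y0, hy0, hDy0⟩ : ∃ y0, 0 ≤ y0 ∧ D t1 y0 = 0 := by
    have hex : ∃ y, 0 < D t1 y := by
      by_contra hc
      push Not at hc
      have : ∫ x, D t1 x * RR k a θ t1 x ≤ 0 :=
        integral_nonpos fun x => mul_nonpos_of_nonpos_of_nonneg (hc x) (RR_pos k a θ t1 x).le
      linarith
    obtain ⟨y, hy⟩ := hex
    rw [← hDabs] at hy
    have h0 : D t1 0 ≤ 0 := by simp [hD]; exact hk.le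
    obtain ⟨y0, h, h'⟩ := intermediate_value_Icc (abs_nonneg y) (gD t1).1.continuousOn ⟨h0, hy.le⟩
    exact ⟨y0, h.1, h'⟩
  set l := t1 / t2 with hl
  have hlp : 0 < l := by positivity
  have hl1 : l ≤ 1 := by rw [hl, div_le_one ht2]; exact h12.le
  set s := √l with hs
  have hsp : 0 < s := Real.sqrt_pos.2 hlp
  have hs2 : s ^ 2 = l := Real.sq_sqrt hlp.le
  have hs1 : s ≤ 1 := by nlinarith
  have hlt : t2 * s ^ 2 = t1 := by rw [hs2, hl]; field_simp
  set c := (a - θ + 1 / k ^ 2) / k ^ 2 with hc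
  have hcp : 0 < c := by
    have : 0 < a - θ := by linarith
    positivity
  set r : ℝ → ℝ := fun u => exp (c * t2 * (log (1 + k ^ 2 * (l * u)) - l * log (1 + k ^ 2 * u)))
      * ((1 + k ^ 2 * u) / (1 + k ^ 2 * (l * u))) with hr
  have hk2 : 0 < k ^ 2 := by positivity
  have hrmono : ∀ u v, 0 ≤ u → u ≤ v → r u ≤ r v := by
    intro u v hu huv
    have h1 := aux_log_mono hk2 hlp hl1 hu huv
    have h2 := aux_frac_mono hk2 hlp hl1 hu huv
    simp only [hr]
    apply mul_le_mul _ h2 (by positivity) (exp_pos _).le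
    apply Real.exp_le_exp.2
    apply mul_le_mul_of_nonneg_left h1 (by positivity)
  have hrpos : ∀ u, 0 ≤ u → 0 < r u := by
    intro u hu; simp only [hr]; positivity
  have hRR : ∀ y, RR k a θ t2 (s * y) = r (y ^ 2) * RR k a θ t1 y := by
    intro y
    have hg := gg_pos k y
    have hg2 : 0 < 1 + k ^ 2 * (l * y ^ 2) := by positivity
    simp only [hr, RR, VV]
    rw [mul_pow, hs2, ← hc]
    have e : exp (t2 * (c * log (1 + k ^ 2 * (l * y ^ 2)) - l * y ^ 2 / k ^ 2))
        = exp (c * t2 * (log (1 + k ^ 2 * (l * y ^ 2)) - l * log (1 + k ^ 2 * y ^ 2)))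
          * exp (t1 * (c * log (1 + k ^ 2 * y ^ 2) - y ^ 2 / k ^ 2)) := by
      rw [← Real.exp_add]
      congr 1
      rw [← hlt, hs2]
      ring
    rw [e]
    field_simp
  have hDD : ∀ y, D t1 y ≤ D t2 (s * y) := by
    intro y
    rw [← hDabs t1 y, ← hDabs t2 (s * y), abs_mul, abs_of_pos hsp]
    have hy := abs_nonneg y
    have h1 := aux_arctan hsp hs1 (mul_nonneg hk.le hy)
    rw [show s * (k * |y|) = k * (s * |y|) by ring] at h1
    have h2 : t1 * (|y| * arctan (k * |y|)) ≤ t2 * (s * |y| * arctan (k * (s * |y|))) := by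
      rw [← hlt]
      calc t2 * s ^ 2 * (|y| * arctan (k * |y|)) = t2 * (s * |y| * (s * arctan (k * |y|))) := by ring
        _ ≤ _ := by gcongr
    have h3 := mul_le_mul_of_nonneg_left h2 (show 0 ≤ 2 * θ by positivity)
    simp only [hD]
    linarith
  have hcross : ∀ y, r (y0 ^ 2) * D t1 y ≤ r (y ^ 2) * D t1 y := by
    intro y
    rw [← hDabs t1 y, ← sq_abs y]
    have hy := abs_nonneg y
    rcases le_total |y| y0 with h | h
    · have h1 := hDmono _ _ hy h
      rw [hDy0] at h1
      exact mul_le_mul_of_nonpos_right (hrmono _ _ (by positivity) (by gcongr)) h1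
    · have h1 := hDmono _ _ hy0 h
      rw [hDy0] at h1
      exact mul_le_mul_of_nonneg_right (hrmono _ _ (by positivity) (by gcongr)) h1
  have i1 := (gD t1).int hk a θ ht1
  have i2 := (gD t2).int hk a θ ht2
  have i2' := i2.comp_mul_left' hsp.ne'
  have hlow : r (y0 ^ 2) * ∫ x, D t1 x * RR k a θ t1 x ≤ ∫ y, D t2 (s * y) * RR k a θ t2 (s * y) := by
    rw [← integral_const_mul]
    refine integral_mono (i1.const_mul _) i2' fun y => ?_
    simp only
    rw [hRR]
    have hR := (RR_pos k a θ t1 y).le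
    have hrp := hrpos (y ^ 2) (by positivity)
    calc r (y0 ^ 2) * (D t1 y * RR k a θ t1 y) = (r (y0 ^ 2) * D t1 y) * RR k a θ t1 y := by ring
      _ ≤ (r (y ^ 2) * D t1 y) * RR k a θ t1 y := mul_le_mul_of_nonneg_right (hcross y) hR
      _ ≤ (r (y ^ 2) * D t2 (s * y)) * RR k a θ t1 y :=
          mul_le_mul_of_nonneg_right (mul_le_mul_of_nonneg_left (hDD y) hrp.le) hR
      _ = _ := by ring
  rw [Measure.integral_comp_mul_left (fun x => D t2 x * RR k a θ t2 x) s, smul_eq_mul] at hlow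
  have h1 := lt_of_lt_of_le (mul_pos (hrpos (y0 ^ 2) (by positivity)) hI1) hlow
  exact pos_of_mul_pos_right h1 (abs_nonneg _)

lemma HH_up {k a θ : ℝ} (hk : 0 < k) (ha : 0 < a) (hθ : 0 < θ) {t1 t2 : ℝ} (ht1 : 0 < t1)
    (h12 : t1 < t2) (hH : 0 < HH k a θ t1) : 0 < HH k a θ t2 := by
  rcases le_or_gt a θ with h | h
  · exact HH_up1 hk ha h ht1 h12 hH
  · exact HH_up2 hk hθ h ht1 h12 hH

lemma HH_cont {k : ℝ} (hk : 0 < k) (a θ : ℝ) {t : ℝ} (ht : 0 < t) : ContinuousAt (HH k a θ) t := by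
  have g := (Gr_q a).mulA k
  have i1 := g.abs.int hk a θ (t := t / 2) (by positivity)
  have i2 := g.abs.int hk a θ (t := 2 * t) (by positivity)
  unfold HH
  refine continuousAt_of_dominated
    (bound := fun x => |x * (a - x ^ 2) * arctan (k * x)| * RR k a θ (t / 2) x
      + |x * (a - x ^ 2) * arctan (k * x)| * RR k a θ (2 * t) x) ?_ ?_ (i1.add i2) ?_
  · exact Eventually.of_forall fun u => (g.1.mul (RR_cont k a θ u)).aestronglyMeasurable
  · filter_upwards [Ioo_mem_nhds (show t / 2 < t by linarith) (show t < 2 * t by linarith)] with u hu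
    refine Eventually.of_forall fun x => ?_
    rw [Real.norm_eq_abs, abs_mul, abs_of_pos (RR_pos k a θ u x), ← mul_add]
    apply mul_le_mul_of_nonneg_left _ (abs_nonneg _)
    unfold RR
    rw [← add_div]
    apply div_le_div_of_nonneg_right _ (gg_pos k x).le
    rcases le_total 0 (VV k a θ x) with h | h
    · have : exp (u * VV k a θ x) ≤ exp (2 * t * VV k a θ x) :=
        Real.exp_le_exp.2 (mul_le_mul_of_nonneg_right hu.2.le h)
      have := exp_pos (t / 2 * VV k a θ x)
      linarith
    · have : exp (u * VV k a θ x) ≤ exp (t / 2 * VV k a θ x) :=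
        Real.exp_le_exp.2 (mul_le_mul_of_nonpos_right hu.1.le h)
      have := exp_pos (2 * t * VV k a θ x)
      linarith
  · refine Eventually.of_forall fun x => ?_
    unfold RR
    apply Continuous.continuousAt
    fun_prop

lemma HH_exists_pos {k a θ : ℝ} (hk : 0 < k) (ha : 0 < a) (hθ : 0 < θ) :
    ∃ t, 0 < t ∧ 0 < HH k a θ t := by
  have hsq : √a ^ 2 = a := Real.sq_sqrt ha.le
  set V0 := VV k a θ (√a) with hV0
  set W : ℝ → ℝ := fun x => VV k a θ x - V0 with hW
  have Wc : Continuous W := (VV_cont k a θ).sub continuous_const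
  set φ : ℝ → ℝ := fun x => x * (a - x ^ 2) * arctan (k * x) / (1 + k ^ 2 * x ^ 2) with hφ
  have φc : Continuous φ :=
    ((Gr_q a).mulA k).1.div (by fun_prop) (fun x => (gg_pos k x).ne')
  have g := (Gr_q a).mulA k
  have e : ∀ t x, exp (-(t * V0)) * (x * (a - x ^ 2) * arctan (k * x) * RR k a θ t x)
      = φ x * exp (t * W x) := by
    intro t x
    calc _ = x * (a - x ^ 2) * arctan (k * x) * (exp (-(t * V0)) * RR k a θ t x) := by ring
      _ = _ := by rw [RR_shift]; simp only [hφ, hW]; ring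
  have it : ∀ t, 0 < t → Integrable (fun x => φ x * exp (t * W x)) := by
    intro t ht
    have := (g.int hk a θ ht).const_mul (exp (-(t * V0)))
    simpa only [e] using this
  have i1 : Integrable (fun x => |φ x| * exp (W x)) := by
    refine (it 1 one_pos).abs.congr (Eventually.of_forall fun x => ?_)
    simp only [one_mul]
    rw [abs_mul, abs_of_pos (exp_pos _)]
  have i2 : Integrable (fun x => φ x * max (W x) 0) := by
    refine Integrable.mono' i1 (φc.mul (Wc.max continuous_const)).aestronglyMeasurable
      (Eventually.of_forall fun x => ?_)
    rw [Real.norm_eq_abs, abs_mul, abs_of_nonneg (le_max_right (W x) 0)]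
    apply mul_le_mul_of_nonneg_left _ (abs_nonneg _)
    apply max_le _ (exp_pos _).le
    have := Real.add_one_le_exp (W x)
    linarith
  have φin : ∀ x, x ^ 2 ≤ a → 0 ≤ φ x := by
    intro x hx
    apply div_nonneg _ (gg_pos k x).le
    have h1 := xA_nonneg hk x
    have h2 : 0 ≤ a - x ^ 2 := by linarith
    have := mul_nonneg h1 h2
    linarith
  have φout : ∀ x, a < x ^ 2 → φ x ≤ 0 ∧ W x < 0 := by
    intro x hx
    refine ⟨?_, ?_⟩
    · apply div_nonpos_of_nonpos_of_nonneg _ (gg_pos k x).le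
      have h1 := xA_nonneg hk x
      have h2 : a - x ^ 2 ≤ 0 := by linarith
      have := mul_nonpos_of_nonneg_of_nonpos h1 h2
      linarith
    · have : VV k a θ x < V0 := VV_anti hk a θ (by rw [hsq]; linarith) (by rw [hsq]; exact hx)
      simp only [hW]; linarith
  have nn : ∀ x, 0 ≤ φ x * max (W x) 0 := by
    intro x
    rcases le_or_gt (x ^ 2) a with hx | hx
    · exact mul_nonneg (φin x hx) (le_max_right _ _)
    · rw [max_eq_right (φout x hx).2.le, mul_zero]
  set I := ∫ x, |φ x| * exp (W x) with hI
  set J := ∫ x, φ x * max (W x) 0 with hJ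
  have hI0 : 0 ≤ I := integral_nonneg fun x => by positivity
  have hJp : 0 < J := by
    set u := (max (a - θ) 0 + a) / 2 with hu
    have hm : max (a - θ) 0 < a := max_lt (by linarith) ha
    have hm0 : 0 ≤ max (a - θ) 0 := le_max_right _ _
    have hup : 0 < u := by rw [hu]; linarith
    have husq : √u ^ 2 = u := Real.sq_sqrt hup.le
    have hua : u < a := by rw [hu]; linarith
    have hul : a - θ ≤ u := by
      have := le_max_left (a - θ) 0
      rw [hu]; linarith
    refine integral_pos_of_integrable_nonneg_nonzero (x := √u)
      (φc.mul (Wc.max continuous_const)) i2 nn ?_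
    have hsu : 0 < √u := Real.sqrt_pos.2 hup
    have h1 : 0 < W (√u) := by
      have : V0 < VV k a θ (√u) := VV_anti hk a θ (by rw [husq]; exact hul) (by rw [husq, hsq]; exact hua)
      simp only [hW]; linarith
    have h2 : 0 < φ (√u) := by
      apply div_pos _ (gg_pos k _)
      have : 0 < arctan (k * √u) := by rw [Real.arctan_pos]; positivity
      have : 0 < a - √u ^ 2 := by rw [husq]; linarith
      positivity
    exact (mul_pos h2 (lt_max_of_lt_left h1)).ne'
  have main : ∀ t, 1 ≤ t → t * J - I ≤ exp (-(t * V0)) * HH k a θ t := by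
    intro t ht
    have htp : 0 < t := by linarith
    have eH : exp (-(t * V0)) * HH k a θ t = ∫ x, φ x * exp (t * W x) := by
      unfold HH
      rw [← integral_const_mul]
      simp only [e]
    rw [eH, hI, hJ, ← integral_const_mul, ← integral_sub (i2.const_mul t) i1]
    refine integral_mono ((i2.const_mul t).sub i1) (it t htp) fun x => ?_
    simp only
    rcases le_or_gt (x ^ 2) a with hx | hx
    · have hp := φin x hx
      have h1 : t * max (W x) 0 ≤ exp (t * W x) := by
        rcases le_total (W x) 0 with h | h
        · rw [max_eq_right h, mul_zero]; exact (exp_pos _).le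
        · rw [max_eq_left h]
          have := Real.add_one_le_exp (t * W x)
          linarith
      have h2 := mul_le_mul_of_nonneg_left h1 hp
      have h3 : 0 ≤ |φ x| * exp (W x) := by positivity
      linarith
    · obtain ⟨hp, hw⟩ := φout x hx
      rw [max_eq_right hw.le, abs_of_nonpos hp]
      have h1 : exp (t * W x) ≤ exp (W x) := Real.exp_le_exp.2 (by nlinarith)
      nlinarith
  have htp : 0 < (I + 1) / J + 1 := by positivity
  refine ⟨(I + 1) / J + 1, htp, ?_⟩
  have h := main ((I + 1) / J + 1) (by have : 0 ≤ (I + 1) / J := by positivity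
                                       linarith)
  rw [add_mul, div_mul_cancel₀ _ hJp.ne'] at h
  have h2 : 0 < exp (-(((I + 1) / J + 1) * V0)) * HH k a θ ((I + 1) / J + 1) := by linarith
  exact pos_of_mul_pos_right h2 (exp_pos _).le

lemma HH_exists_nonpos {k a θ : ℝ} (hk : 0 < k) (hθ : 0 < θ) :
    ∃ t, 0 < t ∧ ¬ 0 < HH k a θ t := by
  obtain ⟨C, hC, bV⟩ := VV_bound hk a θ
  have i0 : Integrable (fun x => exp (-|VV k a θ x|) / (1 + k ^ 2 * x ^ 2)) := by
    refine Integrable.mono' (Gr_one.int hk a θ one_pos) ?_ (Eventually.of_forall fun x => ?_)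
    · have := VV_cont k a θ
      have h : Continuous (fun x => exp (-|VV k a θ x|) / (1 + k ^ 2 * x ^ 2)) :=
        Continuous.div (by fun_prop) (by fun_prop) (fun x => (gg_pos k x).ne')
      exact h.aestronglyMeasurable
    · rw [Real.norm_eq_abs, abs_of_pos (div_pos (exp_pos _) (gg_pos k x)), one_mul]
      unfold RR
      apply div_le_div_of_nonneg_right _ (gg_pos k x).le
      apply Real.exp_le_exp.2
      have := neg_abs_le (VV k a θ x)
      linarith
  set J := ∫ x, exp (-|VV k a θ x|) / (1 + k ^ 2 * x ^ 2) with hJ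
  have hJp : 0 < J := by
    have := VV_cont k a θ
    refine integral_pos_of_integrable_nonneg_nonzero (x := 0)
      (Continuous.div (by fun_prop) (by fun_prop) (fun x => (gg_pos k x).ne')) i0
      (fun x => (div_pos (exp_pos _) (gg_pos k x)).le) (div_pos (exp_pos _) (gg_pos k 0)).ne'
  set B := 2 * θ * (π / (2 * k)) * exp C with hB
  have hBp : 0 < B := by positivity
  have main : ∀ t, 0 < t → t ≤ 1 →
      2 * t * HH k a θ t ≤ t * B * √(π / (t * (1 / (2 * k ^ 2)))) - k * J := by
    intro t ht ht1
    set b := t * (1 / (2 * k ^ 2)) with hb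
    have hbp : 0 < b := by positivity
    have ig : Integrable (fun x : ℝ => exp (-b * x ^ 2)) := integrable_exp_neg_mul_sq hbp
    have gD : Gr (fun x => 2 * t * θ * (x * arctan (k * x)) - k) :=
      (((Gr_x.mulA k).mulB (g := fun _ => 2 * t * θ) continuous_const (fun _ => le_rfl)).add
        (Gr.pow (n := 0) (by norm_num) (-k))).congr (fun x => by ring)
    rw [ibp2 hk a θ ht, ← integral_gaussian, hJ, ← integral_const_mul, ← integral_const_mul,
      ← integral_sub (ig.const_mul _) (i0.const_mul _)]
    refine integral_mono (gD.int hk a θ ht) ((ig.const_mul _).sub (i0.const_mul _)) fun x => ?_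
    have hg := gg_pos k x
    have h1 : x * arctan (k * x) / (1 + k ^ 2 * x ^ 2) ≤ π / (2 * k) := by
      rw [div_le_div_iff₀ hg (by positivity)]
      have h2 : x * arctan (k * x) ≤ |x| * (π / 2) := by
        calc x * arctan (k * x) ≤ |x * arctan (k * x)| := le_abs_self _
          _ = |x| * |arctan (k * x)| := abs_mul _ _
          _ ≤ _ := mul_le_mul_of_nonneg_left (arctan_abs_le _) (abs_nonneg _)
      have h3 : |x| * k ≤ 1 + k ^ 2 * x ^ 2 := by
        rw [← sq_abs x]
        nlinarith [sq_nonneg (|x| * k - 1), abs_nonneg x]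
      have h4 := mul_le_mul_of_nonneg_right h2 (show 0 ≤ 2 * k by positivity)
      have h5 := mul_le_mul_of_nonneg_left h3 pi_pos.le
      nlinarith
    have h2 : exp (t * VV k a θ x) ≤ exp C * exp (-b * x ^ 2) := by
      rw [← Real.exp_add]
      apply Real.exp_le_exp.2
      have h3 := mul_le_mul_of_nonneg_left (bV x) ht.le
      have h4 : t * C ≤ C := by nlinarith
      rw [hb]; linarith
    have h3 : exp (-|VV k a θ x|) / (1 + k ^ 2 * x ^ 2) ≤ RR k a θ t x := by
      unfold RR
      apply div_le_div_of_nonneg_right _ hg.le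
      apply Real.exp_le_exp.2
      have h4 := neg_abs_le (VV k a θ x)
      have h5 := abs_nonneg (VV k a θ x)
      nlinarith
    have h6 : x * arctan (k * x) * RR k a θ t x ≤ π / (2 * k) * (exp C * exp (-b * x ^ 2)) := by
      calc x * arctan (k * x) * RR k a θ t x
          = x * arctan (k * x) / (1 + k ^ 2 * x ^ 2) * exp (t * VV k a θ x) := by unfold RR; ring
        _ ≤ _ := mul_le_mul h1 h2 (exp_pos _).le (by positivity)
    have h7 := mul_le_mul_of_nonneg_left h6 (show 0 ≤ 2 * t * θ by positivity)
    have h8 := mul_le_mul_of_nonneg_left h3 hk.le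
    rw [hB]
    nlinarith
  set M := √(π * (2 * k ^ 2)) with hM
  have hMp : 0 < M := Real.sqrt_pos.2 (by positivity)
  -- choose √t small
  set s := min 1 (k * J / (B * M)) with hs
  have hsp : 0 < s := lt_min one_pos (by positivity)
  have hs1 : s ≤ 1 := min_le_left _ _
  have hs2 : s ≤ k * J / (B * M) := min_le_right _ _
  refine ⟨s ^ 2, by positivity, ?_⟩
  have h := main (s ^ 2) (by positivity) (by nlinarith)
  have e : √(π / (s ^ 2 * (1 / (2 * k ^ 2)))) = M / s := by
    rw [show π / (s ^ 2 * (1 / (2 * k ^ 2))) = π * (2 * k ^ 2) / s ^ 2 by field_simp,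
      Real.sqrt_div' _ (by positivity), Real.sqrt_sq hsp.le]
  rw [e, show s ^ 2 * B * (M / s) = s * (B * M) by field_simp] at h
  rw [le_div_iff₀ (by positivity)] at hs2
  intro hc
  have : 0 < 2 * s ^ 2 * HH k a θ (s ^ 2) := by positivity
  linarith

/-- With the Itô interpretation ν = 1, along any ray σm = k·σa there is a single
critical threshold s > 0: the system is stable (F'_μ[0] > 0, three stationary measures) exactly
for σa < s, and unstable (one stationary measure) for σa > s. -/
theorem stmt2 (k a θ : ℝ) (hk : 0 < k) (ha : 0 < a) (hθ : 0 < θ) :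
    ∃ s : ℝ, 0 < s ∧ ∀ σa : ℝ, 0 < σa →
      ((0 < Fmu' 1 σa (k * σa) a θ ↔ σa < s) ∧
       (σa < s → {μ : ℝ | F 1 σa (k * σa) a θ μ = 0}.ncard = 3) ∧
       (s < σa → {μ : ℝ | F 1 σa (k * σa) a θ μ = 0}.ncard = 1)) := by
  have hinv : ∀ t : ℝ, 0 < t → 1 / (1 / √t) ^ 2 = t := by
    intro t ht
    rw [div_pow, Real.sq_sqrt ht.le]; simp
  obtain ⟨s, hs, hP⟩ := aux_sSup (P := fun σ => 0 < HH k a θ (1 / σ ^ 2))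
    (by
      obtain ⟨t, ht, h⟩ := HH_exists_pos hk ha hθ
      have := Real.sqrt_pos.2 ht
      exact ⟨1 / √t, by positivity, by simp only [hinv t ht]; exact h⟩)
    (by
      obtain ⟨t, ht, h⟩ := HH_exists_nonpos (a := a) hk hθ
      have := Real.sqrt_pos.2 ht
      exact ⟨1 / √t, by positivity, by simp only [hinv t ht]; exact h⟩)
    (by
      intro σ σ' h' hlt h
      have hσ : 0 < σ := h'.trans hlt
      exact HH_up hk ha hθ (by positivity)
        (one_div_lt_one_div_of_lt (by positivity) (by gcongr)) h)
    (by
      intro σ hσ h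
      have hc : ContinuousAt (fun σ : ℝ => HH k a θ (1 / σ ^ 2)) σ := by
        apply ContinuousAt.comp (g := HH k a θ) (HH_cont hk a θ (by positivity))
        exact ContinuousAt.div continuousAt_const (by fun_prop) (by positivity)
      have h1 := hc.eventually (lt_mem_nhds h)
      have h2 : ∀ᶠ x in nhdsWithin σ (Ioi σ), 0 < HH k a θ (1 / x ^ 2) :=
        h1.filter_mono nhdsWithin_le_nhds
      obtain ⟨x, hx, hx'⟩ := (h2.and self_mem_nhdsWithin).exists
      exact ⟨x, hx', hx⟩)
  refine ⟨s, hs, fun σ hσ => ⟨?_, ?_, ?_⟩⟩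
  · rw [Fmu_eq hk hθ hσ]; exact hP σ hσ
  · intro h
    exact ncard_three hk ha hθ hσ ((hP σ hσ).2 h)
  · intro h
    apply ncard_one hk ha hθ hσ
    intro hc
    have := (hP σ hσ).1 hc
    linarith
end

section
/- Let V' be a real polynomial of odd degree with positive leading coefficient having exactly N real roots, all of them simple, and fix σa > 0 and σm > 0. Then there exists θ_c > 0 such that for every θ > θ_c the self-consistency equation F_V(θ,σa,σm)[μ] = 0 has exactly N solutions μ ∈ ℝ (equivalently, the McKean–Vlasov SDE dX = (−V'(X) − θ(X − m₁))dt + √(σa² + σm²X²) dW with Itô noise has exactly N stationary measures). -/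
open MeasureTheory Real Set Filter

/-- Unnormalised stationary density of the Itô McKean–Vlasov SDE
`dX = (−V'(X) − θ(X − m₁))dt + √(σa² + σm²X²) dW` with mean replaced by μ. -/
noncomputable def pV (V' : Polynomial ℝ) (θ σa σm μ x : ℝ) : ℝ :=
  (σa ^ 2 + σm ^ 2 * x ^ 2)⁻¹ *
    Real.exp (-2 * ∫ y in (0 : ℝ)..x, (V'.eval y + θ * (y - μ)) / (σa ^ 2 + σm ^ 2 * y ^ 2))

/-- The self-consistency function F_V(θ,σa,σm)[μ]. -/
noncomputable def FV (V' : Polynomial ℝ) (θ σa σm μ : ℝ) : ℝ :=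
  (∫ x : ℝ, (x - μ) * pV V' θ σa σm μ x) / ∫ x : ℝ, pV V' θ σa σm μ x


lemma aux_count {n : ℕ} (t : Fin (n + 1) → ℝ) (Z : Set ℝ)
    (hz : ∀ i : Fin n, ∃ z ∈ Ioo (t i.castSucc) (t i.succ), z ∈ Z) (ht : StrictMono t) :
    (n : ℕ∞) ≤ Z.encard := by
  choose z hz1 hz2 using hz
  have hmono : StrictMono z := by
    intro i j hij
    have h1 : t i.succ ≤ t j.castSucc := ht.monotone (by
      rw [Fin.le_def]; simp; exact hij)
    exact (hz1 i).2.trans_le (h1.trans (hz1 j).1.le)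
  have : (range z).encard = n := by
    rw [← Set.image_univ, hmono.injective.encard_image]
    simp
  rw [← this]
  exact Set.encard_le_encard (by rintro _ ⟨i, rfl⟩; exact hz2 i)

lemma aux_rolle (G G' : ℝ → ℝ) (hG : ∀ s, HasDerivAt G (G' s) s) (n : ℕ)
    (h : {s | G' s = 0}.encard ≤ n) : {s | G s = 0}.encard ≤ (n + 1 : ℕ) := by
  by_contra hcon
  push Not at hcon
  have h2 : ((n + 2 : ℕ) : ℕ∞) ≤ {s | G s = 0}.encard := by
    have := Order.add_one_le_of_lt hcon
    push_cast at this ⊢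
    rw [add_assoc, one_add_one_eq_two] at this
    exact this
  obtain ⟨S, hS, hcard⟩ := Set.exists_subset_encard_eq h2
  have hfin : S.Finite := Set.finite_of_encard_eq_coe hcard
  obtain ⟨F, rfl⟩ := hfin.exists_finset_coe
  have hc : F.card = n + 2 := by
    rw [Set.encard_coe_eq_coe_finsetCard] at hcard
    exact_mod_cast hcard
  have := aux_count (n := n + 1) (F.orderEmbOfFin hc) {s | G' s = 0} (by
    intro i
    obtain ⟨c, hc1, hc2⟩ := exists_hasDerivAt_eq_zero (f := G) (f' := G')
      (a := F.orderEmbOfFin hc i.castSucc) (b := F.orderEmbOfFin hc i.succ)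
      ((F.orderEmbOfFin hc).strictMono (Fin.castSucc_lt_succ))
      (fun x _ => (hG x).continuousAt.continuousWithinAt)
      (by
        have h1 : G _ = 0 := hS (F.orderEmbOfFin_mem hc i.castSucc)
        have h2 : G _ = 0 := hS (F.orderEmbOfFin_mem hc i.succ)
        rw [h1, h2])
      (fun x _ => hG x)
    exact ⟨c, hc1, hc2⟩) (F.orderEmbOfFin hc).strictMono
  have := this.trans h
  have : n + 1 ≤ n := by exact_mod_cast this
  omega

lemma aux_int (F h : ℝ → ℝ) (hF : Integrable F) (hh : Continuous h) (M : ℝ) (hM : ∀ x, |h x| ≤ M)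
    (s : ℝ) : Integrable (fun x => F x * exp (s * h x)) := by
  refine hF.mul_bdd (c := exp (|s| * M)) ?_ ?_
  · exact (by fun_prop : Continuous fun x => exp (s * h x)).aestronglyMeasurable
  · refine Eventually.of_forall fun x => ?_
    rw [norm_eq_abs, abs_exp, exp_le_exp]
    calc s * h x ≤ |s * h x| := le_abs_self _
      _ = |s| * |h x| := abs_mul _ _
      _ ≤ _ := by gcongr; exact hM x

lemma aux_deriv (F h : ℝ → ℝ) (hF : Integrable F) (hh : Continuous h) (M : ℝ)
    (hM : ∀ x, |h x| ≤ M) (s : ℝ) :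
    HasDerivAt (fun s => ∫ x, F x * exp (s * h x)) (∫ x, F x * h x * exp (s * h x)) s := by
  have hM0 : 0 ≤ M := (abs_nonneg _).trans (hM 0)
  have hFh : Integrable (fun x => F x * h x) := by
    refine hF.mul_bdd (c := M) hh.aestronglyMeasurable (Eventually.of_forall fun x => hM x)
  refine (hasDerivAt_integral_of_dominated_loc_of_deriv_le
    (F := fun s x => F x * exp (s * h x)) (F' := fun s x => F x * h x * exp (s * h x))
    (s := Metric.ball s 1) (bound := fun x => |F x| * (M * exp ((|s| + 1) * M)))
    (Metric.ball_mem_nhds _ one_pos) ?_ ?_ ?_ ?_ ?_ ?_).2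
  · exact Eventually.of_forall fun s => (aux_int F h hF hh M hM s).aestronglyMeasurable
  · exact aux_int F h hF hh M hM s
  · exact (aux_int _ h hFh hh M hM s).aestronglyMeasurable
  · refine Eventually.of_forall fun x t ht => ?_
    have ht' : |t| ≤ |s| + 1 := by
      rw [Metric.mem_ball, Real.dist_eq] at ht
      have := abs_sub_abs_le_abs_sub t s
      linarith
    rw [norm_eq_abs, abs_mul, abs_mul, abs_exp, mul_assoc]
    refine mul_le_mul_of_nonneg_left (mul_le_mul (hM x) (exp_le_exp.2 ?_) (exp_pos _).le hM0)
      (abs_nonneg _)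
    · calc t * h x ≤ |t * h x| := le_abs_self _
        _ = |t| * |h x| := abs_mul _ _
        _ ≤ _ := by gcongr; exact hM x
  · exact hF.abs.mul_const _
  · refine Eventually.of_forall fun x t ht => ?_
    have h1 : HasDerivAt (fun t => t * h x) (h x) t := by
      simpa using (hasDerivAt_id t).mul_const (h x)
    have := (h1.exp).const_mul (F x)
    exact this.congr_deriv (by ring)

lemma aux_upper (h : ℝ → ℝ) (hh : Continuous h) (M : ℝ) (hM : ∀ x, |h x| ≤ M) (T : Finset ℝ) :
    ∀ F : ℝ → ℝ, Continuous F → Integrable F → (∀ x, 0 ≤ F x * ∏ c ∈ T, (h x - h c)) →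
      (∃ x, F x * ∏ c ∈ T, (h x - h c) ≠ 0) →
      {s : ℝ | ∫ x, F x * exp (s * h x) = 0}.encard ≤ T.card := by
  classical
  induction T using Finset.induction_on with
  | empty =>
    intro F hFc hF h0 ⟨x, hx⟩
    simp only [Finset.prod_empty, mul_one] at h0 hx
    have : {s : ℝ | ∫ x, F x * exp (s * h x) = 0} = ∅ := by
      ext s
      simp only [mem_ofPred_eq, mem_empty_iff_false, iff_false]
      refine ne_of_gt (integral_pos_of_integrable_nonneg_nonzero (x := x) (by fun_prop)
        (aux_int F h hF hh M hM s) (fun x => mul_nonneg (h0 x) (exp_pos _).le) ?_)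
      exact mul_ne_zero hx (exp_pos _).ne'
    simp [this]
  | insert c T hc ih =>
    intro F hFc hF h0 hx
    have key : ∀ x, F x * ∏ d ∈ insert c T, (h x - h d)
        = (F x * (h x - h c)) * ∏ d ∈ T, (h x - h d) := by
      intro x; rw [Finset.prod_insert hc]; ring
    simp only [key] at h0 hx
    have hFh : Integrable (fun x => F x * h x) :=
      hF.mul_bdd (c := M) hh.aestronglyMeasurable (Eventually.of_forall fun x => hM x)
    have hInt : Integrable (fun x => F x * (h x - h c)) := by
      simp only [mul_sub]
      exact hFh.sub (hF.mul_const _)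
    have h1 := ih (fun x => F x * (h x - h c)) (by fun_prop) hInt h0 hx
    rw [Finset.card_insert_of_notMem hc]
    have h2 := aux_rolle (fun s => exp (-(s * h c)) * ∫ x, F x * exp (s * h x))
      (fun s => exp (-(s * h c)) * ∫ x, F x * (h x - h c) * exp (s * h x)) (by
        intro s
        have e1 : HasDerivAt (fun s => -(s * h c)) (-h c) s := by
          simpa using ((hasDerivAt_id s).mul_const (h c)).fun_neg
        have := e1.exp.fun_mul (aux_deriv F h hF hh M hM s)
        refine this.congr_deriv ?_
        have : ∫ x, F x * (h x - h c) * exp (s * h x)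
            = (∫ x, F x * h x * exp (s * h x)) - h c * ∫ x, F x * exp (s * h x) := by
          rw [← integral_const_mul, ← integral_sub (aux_int _ h hFh hh M hM s)
            ((aux_int F h hF hh M hM s).const_mul _)]
          congr 1; ext x; ring
        rw [this]; ring) T.card (by
        simpa [(exp_pos _).ne'] using h1)
    simpa [(exp_pos _).ne'] using h2

lemma aux_spos {σa : ℝ} (σm : ℝ) (ha : 0 < σa) (y : ℝ) : 0 < σa ^ 2 + σm ^ 2 * y ^ 2 := by
  positivity

lemma aux_Bderiv (b : ℝ → ℝ) (hb : Continuous b) (σa σm : ℝ) (ha : 0 < σa) (x : ℝ) :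
    HasDerivAt (fun x => ∫ y in (0 : ℝ)..x, b y / (σa ^ 2 + σm ^ 2 * y ^ 2))
      (b x / (σa ^ 2 + σm ^ 2 * x ^ 2)) x := by
  have hc : Continuous fun y => b y / (σa ^ 2 + σm ^ 2 * y ^ 2) :=
    hb.div (by fun_prop) (fun y => (aux_spos σm ha y).ne')
  exact intervalIntegral.integral_hasDerivAt_right (hc.intervalIntegrable _ _)
    (hc.stronglyMeasurableAtFilter _ _) hc.continuousAt

lemma aux_Btop (b : ℝ → ℝ) (hb : Continuous b) (σa σm : ℝ) (ha : 0 < σa) (k R : ℝ) (hk : 0 < k)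
    (hR : 1 ≤ R) (h : ∀ x, R ≤ x → k * x ≤ b x) :
    Tendsto (fun x => ∫ y in (0 : ℝ)..x, b y / (σa ^ 2 + σm ^ 2 * y ^ 2)) atTop atTop := by
  set B := fun x => ∫ y in (0 : ℝ)..x, b y / (σa ^ 2 + σm ^ 2 * y ^ 2) with hB
  set κ := k / (σa ^ 2 + σm ^ 2) with hκ
  have hS : 0 < σa ^ 2 + σm ^ 2 := by positivity
  have hκ0 : 0 < κ := by positivity
  have hder : ∀ x, R ≤ x → HasDerivAt (fun x => B x - κ * log x)
      (b x / (σa ^ 2 + σm ^ 2 * x ^ 2) - κ * x⁻¹) x := fun x hx =>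
    (aux_Bderiv b hb σa σm ha x).fun_sub ((Real.hasDerivAt_log (by linarith)).const_mul κ)
  have hmono : MonotoneOn (fun x => B x - κ * log x) (Ici R) := by
    refine monotoneOn_of_deriv_nonneg (convex_Ici R)
      (fun x hx => (hder x hx).continuousAt.continuousWithinAt)
      (fun x hx => ?_) (fun x hx => ?_)
    · rw [interior_Ici] at hx
      exact (hder x (le_of_lt hx)).differentiableAt.differentiableWithinAt
    · rw [interior_Ici] at hx
      have hx' : R ≤ x := le_of_lt hx
      rw [(hder x hx').deriv, sub_nonneg, hκ, ← div_eq_mul_inv, div_div,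
        div_le_div_iff₀ (by nlinarith) (aux_spos σm ha x)]
      have h1 : k * x ≤ b x := h x hx'
      have hx1 : 1 ≤ x := hR.trans hx'
      have hs : σa ^ 2 + σm ^ 2 * x ^ 2 ≤ (σa ^ 2 + σm ^ 2) * x * x := by
        have : σa ^ 2 * 1 ≤ σa ^ 2 * (x * x) := by gcongr; nlinarith
        nlinarith
      have hx0 : 0 ≤ x := by linarith
      calc k * (σa ^ 2 + σm ^ 2 * x ^ 2) ≤ k * ((σa ^ 2 + σm ^ 2) * x * x) := by gcongr
        _ = (k * x) * ((σa ^ 2 + σm ^ 2) * x) := by ring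
        _ ≤ _ := by gcongr
  have hlow : Tendsto (fun x => (B R - κ * log R) + κ * log x) atTop atTop :=
    tendsto_atTop_add_const_left _ _ (Real.tendsto_log_atTop.const_mul_atTop hκ0)
  refine tendsto_atTop_mono' _ ?_ hlow
  filter_upwards [eventually_ge_atTop R] with x hx
  have := hmono self_mem_Ici (show x ∈ Ici R from hx) hx
  simp only at this
  linarith

lemma aux_reflect (b : ℝ → ℝ) (σa σm x : ℝ) :
    ∫ y in (0 : ℝ)..x, (-b (-y)) / (σa ^ 2 + σm ^ 2 * y ^ 2) =
      ∫ y in (0 : ℝ)..(-x), b y / (σa ^ 2 + σm ^ 2 * y ^ 2) := by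
  have := intervalIntegral.integral_comp_neg (a := 0) (b := x)
    (fun y => b y / (σa ^ 2 + σm ^ 2 * y ^ 2))
  rw [neg_zero] at this
  rw [intervalIntegral.integral_symm (-x) 0, ← this, ← intervalIntegral.integral_neg]
  congr 1; ext y
  rw [neg_sq, neg_div]

/-- general density -/
noncomputable def pg (b : ℝ → ℝ) (σa σm x : ℝ) : ℝ :=
  (σa ^ 2 + σm ^ 2 * x ^ 2)⁻¹ *
    Real.exp (-2 * ∫ y in (0 : ℝ)..x, b y / (σa ^ 2 + σm ^ 2 * y ^ 2))

lemma pg_pos (b : ℝ → ℝ) (σa σm x : ℝ) (ha : 0 < σa) : 0 < pg b σa σm x := by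
  have := aux_spos σm ha x
  unfold pg; positivity

lemma pg_cont (b : ℝ → ℝ) (hb : Continuous b) (σa σm : ℝ) (ha : 0 < σa) :
    Continuous (pg b σa σm) := by
  have h1 : Continuous (fun x => ∫ y in (0 : ℝ)..x, b y / (σa ^ 2 + σm ^ 2 * y ^ 2)) :=
    continuous_iff_continuousAt.2 fun x => (aux_Bderiv b hb σa σm ha x).continuousAt
  unfold pg
  refine Continuous.mul (Continuous.inv₀ (by fun_prop) fun x => (aux_spos σm ha x).ne') ?_
  fun_prop

lemma aux_qderiv (b : ℝ → ℝ) (hb : Continuous b) (σa σm : ℝ) (ha : 0 < σa) (x : ℝ) :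
    HasDerivAt (fun x => Real.exp (-2 * ∫ y in (0 : ℝ)..x, b y / (σa ^ 2 + σm ^ 2 * y ^ 2)))
      (-2 * (b x * pg b σa σm x)) x := by
  refine ((aux_Bderiv b hb σa σm ha x).const_mul (-2)).exp.congr_deriv ?_
  unfold pg
  rw [div_eq_mul_inv]; ring

lemma aux_qtop (b : ℝ → ℝ) (hb : Continuous b) (σa σm : ℝ) (ha : 0 < σa) (k R : ℝ) (hk : 0 < k)
    (hR : 1 ≤ R) (h : ∀ x, R ≤ x → k * x ≤ b x) :
    Tendsto (fun x => Real.exp (-2 * ∫ y in (0 : ℝ)..x, b y / (σa ^ 2 + σm ^ 2 * y ^ 2)))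
      atTop (nhds 0) :=
  Real.tendsto_exp_atBot.comp
    ((aux_Btop b hb σa σm ha k R hk hR h).const_mul_atTop_of_neg (by norm_num))

lemma aux_intIoi (b : ℝ → ℝ) (hb : Continuous b) (σa σm : ℝ) (ha : 0 < σa) (k R : ℝ) (hk : 0 < k)
    (hR : 1 ≤ R) (h : ∀ x, R ≤ x → k * x ≤ b x) :
    IntegrableOn (fun x => b x * pg b σa σm x) (Ioi R) := by
  have := integrableOn_Ioi_deriv_of_nonpos' (a := R) (fun x _ => aux_qderiv b hb σa σm ha x)
    (fun x hx => by
      have h1 := h x (le_of_lt hx)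
      have h2 := pg_pos b σa σm x ha
      have hx' : R < x := hx
      have : 0 ≤ b x := le_trans (by nlinarith) h1
      nlinarith [mul_nonneg this h2.le]) (aux_qtop b hb σa σm ha k R hk hR h)
  have := this.const_mul (-2)⁻¹
  refine this.congr (Eventually.of_forall fun x => ?_)
  simp only; ring

lemma aux_pgreflect (b : ℝ → ℝ) (σa σm x : ℝ) :
    pg (fun y => -b (-y)) σa σm x = pg b σa σm (-x) := by
  unfold pg
  rw [aux_reflect, neg_sq]

lemma aux_zero (b : ℝ → ℝ) (hb : Continuous b) (σa σm : ℝ) (ha : 0 < σa) (k R : ℝ) (hk : 0 < k)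
    (hR : 1 ≤ R) (h : ∀ x, R ≤ x → k * x ≤ b x) (h' : ∀ x, x ≤ -R → b x ≤ k * x) :
    Integrable (fun x => b x * pg b σa σm x) ∧ ∫ x, b x * pg b σa σm x = 0 := by
  have hr : ∀ x, R ≤ x → k * x ≤ -b (-x) := fun x hx => by
    have := h' (-x) (by linarith); linarith
  have hbc : Continuous fun y => -b (-y) := by fun_prop
  have hcont : Continuous (fun x => b x * pg b σa σm x) := hb.mul (pg_cont b hb σa σm ha)
  have i1 := aux_intIoi b hb σa σm ha k R hk hR h
  have i2 : IntegrableOn (fun x => b x * pg b σa σm x) (Iio (-R)) := by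
    have := aux_intIoi _ hbc σa σm ha k R hk hR hr
    rw [← (Measure.measurePreserving_neg (volume : Measure ℝ)).integrableOn_comp_preimage
      (Homeomorph.neg ℝ).measurableEmbedding]
    have hpre : (Neg.neg : ℝ → ℝ) ⁻¹' (Iio (-R)) = Ioi R := by ext x; simp
    rw [hpre]
    simp only [aux_pgreflect] at this
    have := this.neg
    refine this.congr (Eventually.of_forall fun x => ?_)
    simp
  have i3 : IntegrableOn (fun x => b x * pg b σa σm x) (Icc (-R) R) :=
    hcont.continuousOn.integrableOn_compact isCompact_Icc
  have hI : Integrable (fun x => b x * pg b σa σm x) := by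
    rw [← integrableOn_univ]
    refine ((i2.union i3).union i1).mono_set fun x _ => ?_
    simp only [mem_union, mem_Iio, mem_Icc, mem_Ioi]
    grind
  refine ⟨hI, ?_⟩
  have hbot : Tendsto (fun x => Real.exp (-2 * ∫ y in (0 : ℝ)..x, b y / (σa ^ 2 + σm ^ 2 * y ^ 2)))
      atBot (nhds 0) := by
    have := (aux_qtop _ hbc σa σm ha k R hk hR hr).comp tendsto_neg_atBot_atTop
    refine this.congr fun x => ?_
    simp only [Function.comp, aux_reflect, neg_neg]
  have := integral_of_hasDerivAt_of_tendsto (aux_qderiv b hb σa σm ha) (hI.const_mul (-2)) hbot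
    (aux_qtop b hb σa σm ha k R hk hR h)
  rw [integral_const_mul] at this
  linarith

lemma aux_dom (b : ℝ → ℝ) (hb : Continuous b) (σa σm : ℝ) (ha : 0 < σa)
    (hI : Integrable (fun x => b x * pg b σa σm x)) (f : ℝ → ℝ) (hf : Continuous f) (C R : ℝ)
    (hfb : ∀ x, R < |x| → |f x| ≤ C * |b x|) : Integrable (fun x => f x * pg b σa σm x) := by
  have hcont : Continuous (fun x => f x * pg b σa σm x) := hf.mul (pg_cont b hb σa σm ha)
  have i3 : IntegrableOn (fun x => f x * pg b σa σm x) (Icc (-R) R) :=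
    hcont.continuousOn.integrableOn_compact isCompact_Icc
  have i1 : IntegrableOn (fun x => f x * pg b σa σm x) (Icc (-R) R)ᶜ := by
    refine Integrable.mono' ((hI.norm.const_mul C).integrableOn) hcont.aestronglyMeasurable ?_
    rw [ae_restrict_iff' measurableSet_Icc.compl]
    refine Eventually.of_forall fun x hx => ?_
    rw [norm_mul, norm_mul, ← mul_assoc]
    refine mul_le_mul_of_nonneg_right (hfb x ?_) (norm_nonneg _)
    by_contra hcon
    exact hx (abs_le.1 (not_lt.1 hcon))
  rw [← integrableOn_univ, ← union_compl_self (Icc (-R) R)]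
  exact i3.union i1

lemma aux_conc (g φ : ℝ → ℝ) (hg : Continuous g) (hφ : Continuous φ) (μ : ℝ) (hpos : 0 < g μ)
    (h1 : StrictAntiOn φ (Iic μ)) (h2 : StrictMonoOn φ (Ici μ))
    (hI : ∀ θ : ℝ, 0 < θ → Integrable fun x => g x * exp (-2 * θ * φ x)) :
    ∀ᶠ θ : ℝ in atTop, 0 < ∫ x, g x * exp (-2 * θ * φ x) := by
  obtain ⟨δ, hδ, hgδ⟩ : ∃ δ > 0, ∀ x, |x - μ| ≤ δ → g μ / 2 < g x := by
    have : ∀ᶠ x in nhds μ, g μ / 2 < g x := hg.continuousAt.eventually (lt_mem_nhds (by linarith))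
    obtain ⟨ε, hε, h⟩ := Metric.eventually_nhds_iff.1 this
    refine ⟨ε / 2, by linarith, fun x hx => h ?_⟩
    rw [Real.dist_eq]; linarith
  obtain ⟨η, hη, hηl, hηr⟩ : ∃ η > 0, φ μ + 2 * η ≤ φ (μ - δ) ∧ φ μ + 2 * η ≤ φ (μ + δ) := by
    have l1 : φ μ < φ (μ - δ) := h1 (by simp [hδ.le]) self_mem_Iic (by linarith)
    have l2 : φ μ < φ (μ + δ) := h2 self_mem_Ici (by simp [hδ.le]) (by linarith)
    refine ⟨min (φ (μ - δ) - φ μ) (φ (μ + δ) - φ μ) / 2, ?_, ?_, ?_⟩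
    · have := lt_min (sub_pos.2 l1) (sub_pos.2 l2); linarith
    · have := min_le_left (φ (μ - δ) - φ μ) (φ (μ + δ) - φ μ); linarith
    · have := min_le_right (φ (μ - δ) - φ μ) (φ (μ + δ) - φ μ); linarith
  obtain ⟨r, hr, hrδ, hφr⟩ : ∃ r > 0, r ≤ δ ∧ ∀ x, |x - μ| ≤ r → φ x < φ μ + η := by
    have : ∀ᶠ x in nhds μ, φ x < φ μ + η := hφ.continuousAt.eventually (gt_mem_nhds (by linarith))
    obtain ⟨ε, hε, h⟩ := Metric.eventually_nhds_iff.1 this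
    refine ⟨min (ε / 2) δ, by positivity, min_le_right _ _, fun x hx => h ?_⟩
    have := min_le_left (ε / 2) δ
    rw [Real.dist_eq]; linarith
  set m := φ μ + 2 * η with hm
  have hout : ∀ x, δ < |x - μ| → m ≤ φ x := by
    intro x hx
    rcases lt_abs.1 hx with h | h
    · exact hηr.trans (h2 (show μ ≤ μ + δ by linarith) (show μ ≤ x by linarith) (by linarith)).le
    · exact hηl.trans (h1 (show x ≤ μ by linarith) (show μ - δ ≤ μ by linarith) (by linarith)).le
  set C := ∫ x, |g x * exp (-2 * 1 * φ x)| * exp (2 * m) with hC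
  have hlim : Tendsto (fun θ : ℝ => (2 * r) * (g μ / 2 * exp (2 * θ * η))) atTop atTop := by
    refine Tendsto.const_mul_atTop (by positivity) (Tendsto.const_mul_atTop (by positivity) ?_)
    refine tendsto_exp_atTop.comp ?_
    have : Tendsto (fun θ : ℝ => θ * (2 * η)) atTop atTop :=
      tendsto_id.atTop_mul_const (by positivity)
    refine this.congr fun θ => by ring
  filter_upwards [hlim.eventually_gt_atTop C, eventually_ge_atTop 1] with θ hθ hθ1
  have hInt1 : Integrable (fun x => |g x * exp (-2 * 1 * φ x)| * exp (2 * m)) :=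
    (hI 1 one_pos).abs.mul_const _
  have hind : Integrable ((Icc (μ - r) (μ + r)).indicator
      (fun _ : ℝ => g μ / 2 * exp (2 * θ * η))) := by
    rw [integrable_indicator_iff measurableSet_Icc]
    exact integrableOn_const (by simp)
  have hle : ∫ x, ((Icc (μ - r) (μ + r)).indicator (fun _ : ℝ => g μ / 2 * exp (2 * θ * η)) x
      - |g x * exp (-2 * 1 * φ x)| * exp (2 * m)) ≤
      ∫ x, exp (2 * θ * m) * (g x * exp (-2 * θ * φ x)) := by
    refine integral_mono (hind.sub hInt1) ((hI θ (by linarith)).const_mul _) fun x => ?_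
    have hform : exp (2 * θ * m) * (g x * exp (-2 * θ * φ x)) = g x * exp (2 * θ * (m - φ x)) := by
      rw [mul_left_comm, ← exp_add]; congr 2; ring
    have hform1 : |g x * exp (-2 * 1 * φ x)| * exp (2 * m) = |g x| * exp (2 * (m - φ x)) := by
      rw [abs_mul, abs_exp, mul_assoc, ← exp_add]; congr 2; ring
    simp only [hform, hform1]
    have hnn : 0 ≤ |g x| * exp (2 * (m - φ x)) := by positivity
    by_cases hx : x ∈ Icc (μ - r) (μ + r)
    · rw [indicator_of_mem hx]
      have hxr : |x - μ| ≤ r := abs_le.2 ⟨by linarith [hx.1], by linarith [hx.2]⟩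
      have e1 := hgδ x (hxr.trans hrδ)
      have e2 := hφr x hxr
      have : g μ / 2 * exp (2 * θ * η) ≤ g x * exp (2 * θ * (m - φ x)) := by
        refine mul_le_mul e1.le (exp_le_exp.2 ?_) (exp_pos _).le (by linarith)
        refine mul_le_mul_of_nonneg_left ?_ (by linarith)
        rw [hm]; linarith
      linarith
    · rw [indicator_of_notMem hx]
      by_cases hx2 : |x - μ| ≤ δ
      · have e1 := hgδ x hx2
        have : 0 ≤ g x * exp (2 * θ * (m - φ x)) := mul_nonneg (by linarith) (exp_pos _).le
        linarith
      · have e1 := hout x (not_le.1 hx2)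
        have e2 : exp (2 * θ * (m - φ x)) ≤ exp (2 * (m - φ x)) := by
          apply exp_le_exp.2; nlinarith
        have e3 : |g x| * exp (2 * θ * (m - φ x)) ≤ |g x| * exp (2 * (m - φ x)) := by gcongr
        have e4 : -|g x| * exp (2 * θ * (m - φ x)) ≤ g x * exp (2 * θ * (m - φ x)) := by
          gcongr; exact neg_abs_le _
        linarith
  rw [integral_sub hind hInt1, integral_indicator measurableSet_Icc] at hle
  have hv : ∫ x in Icc (μ - r) (μ + r), g μ / 2 * exp (2 * θ * η)
      = (2 * r) * (g μ / 2 * exp (2 * θ * η)) := by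
    rw [setIntegral_const, Measure.real, Real.volume_Icc, ENNReal.toReal_ofReal (by linarith),
      smul_eq_mul]
    congr 1; ring
  rw [hv, integral_const_mul (exp (2 * θ * m))] at hle
  have hle' : (2 * r) * (g μ / 2 * exp (2 * θ * η)) - C
      ≤ exp (2 * θ * m) * ∫ x, g x * exp (-2 * θ * φ x) := hle
  have : 0 < exp (2 * θ * m) * ∫ x, g x * exp (-2 * θ * φ x) := by linarith
  exact pos_of_mul_pos_right this (exp_pos _).le

lemma aux_phi (σa σm : ℝ) (ha : 0 < σa) (μ : ℝ) (φ : ℝ → ℝ)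
    (hφ : φ = fun x => ∫ y in (0 : ℝ)..x, (y - μ) / (σa ^ 2 + σm ^ 2 * y ^ 2)) :
    Continuous φ ∧ StrictAntiOn φ (Iic μ) ∧ StrictMonoOn φ (Ici μ) := by
  have hd : ∀ x, HasDerivAt φ ((x - μ) / (σa ^ 2 + σm ^ 2 * x ^ 2)) x := fun x => by
    rw [hφ]; exact aux_Bderiv (fun y => y - μ) (by fun_prop) σa σm ha x
  have hc : Continuous φ := continuous_iff_continuousAt.2 fun x => (hd x).continuousAt
  refine ⟨hc, strictAntiOn_of_deriv_neg (convex_Iic μ) hc.continuousOn fun x hx => ?_,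
    strictMonoOn_of_deriv_pos (convex_Ici μ) hc.continuousOn fun x hx => ?_⟩
  · rw [interior_Iic] at hx
    rw [(hd x).deriv]
    exact div_neg_of_neg_of_pos (sub_neg.2 hx) (aux_spos σm ha x)
  · rw [interior_Ici] at hx
    rw [(hd x).deriv]
    exact div_pos (sub_pos.2 hx) (aux_spos σm ha x)

lemma aux_poly_large (V' : Polynomial ℝ) (hodd : Odd V'.natDegree) (hlead : 0 < V'.leadingCoeff) :
    ∃ R : ℝ, 1 ≤ R ∧ (∀ x, R ≤ x → 0 < V'.eval x) ∧ ∀ x, x ≤ -R → V'.eval x < 0 := by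
  have key : ∀ W : Polynomial ℝ, Odd W.natDegree → 0 < W.leadingCoeff →
      ∀ᶠ x in atTop, 0 < W.eval x := fun W h1 h2 =>
    (W.tendsto_atTop_of_leadingCoeff_nonneg (Polynomial.natDegree_pos_iff_degree_pos.1 h1.pos)
      h2.le).eventually_gt_atTop 0
  have e1 := key V' hodd hlead
  have hd : (-(V'.comp (-Polynomial.X))).natDegree = V'.natDegree := by
    rw [Polynomial.natDegree_neg, Polynomial.natDegree_comp]; simp
  have e2 := key (-(V'.comp (-Polynomial.X))) (by rwa [hd]) (by
    rw [Polynomial.leadingCoeff_neg, Polynomial.leadingCoeff_comp (by simp)]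
    simp [hodd.neg_one_pow, hlead])
  obtain ⟨R, hR⟩ := eventually_atTop.1 (e1.and e2)
  refine ⟨max R 1, le_max_right _ _, fun x hx => (hR x ((le_max_left _ _).trans hx)).1,
    fun x hx => ?_⟩
  have := (hR (-x) (by have := le_max_left R 1; linarith)).2
  simpa using this

lemma aux_poly_sign (V' : Polynomial ℝ) (hodd : Odd V'.natDegree) (hlead : 0 < V'.leadingCoeff)
    (hsimple : ∀ x : ℝ, V'.eval x = 0 → (Polynomial.derivative V').eval x ≠ 0) :
    ∃ (T : Finset ℝ) (Q : ℝ → ℝ), (T : Set ℝ) = {x : ℝ | V'.eval x = 0} ∧ (∀ x, 0 < Q x) ∧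
      ∀ x, V'.eval x = (∏ c ∈ T, (x - c)) * Q x := by
  classical
  have hV : V' ≠ 0 := by rintro rfl; simp at hlead
  have hnd : V'.roots.Nodup := by
    rw [Multiset.nodup_iff_count_le_one]
    intro a
    rw [Polynomial.count_roots]
    by_contra hcon
    have := (Polynomial.one_lt_rootMultiplicity_iff_isRoot hV).1 (not_le.1 hcon)
    exact hsimple a this.1 this.2
  obtain ⟨Q, hQ, -, hQr⟩ := Polynomial.exists_prod_multiset_X_sub_C_mul V'
  have hfac : ∀ x, V'.eval x = (∏ c ∈ V'.roots.toFinset, (x - c)) * Q.eval x := by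
    intro x
    conv_lhs => rw [← hQ]
    rw [Polynomial.eval_mul, Polynomial.eval_multiset_prod, Finset.prod, Multiset.toFinset_val,
      hnd.dedup, Multiset.map_map]
    simp
  have hQ0 : Q ≠ 0 := by rintro rfl; simp at hQ; exact hV hQ.symm
  refine ⟨V'.roots.toFinset, fun x => Q.eval x, ?_, ?_, hfac⟩
  · ext x; simp [hV]
  · intro x
    by_contra hcon
    obtain ⟨R, -, hR, -⟩ := aux_poly_large V' hodd hlead
    obtain ⟨B, hB⟩ := V'.roots.toFinset.bddAbove
    set y := max R (B + 1) with hy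
    have h1 := hR y (le_max_left _ _)
    rw [hfac] at h1
    have h2 : 0 < ∏ c ∈ V'.roots.toFinset, (y - c) := Finset.prod_pos fun c hc => by
      have := hB hc
      have := le_max_right R (B + 1)
      linarith
    have h3 : 0 < Q.eval y := pos_of_mul_pos_right h1 h2.le
    obtain ⟨z, hz⟩ := mem_range_of_exists_le_of_exists_ge (f := fun x => Q.eval x) Q.continuous
      ⟨x, not_lt.1 hcon⟩ ⟨y, h3.le⟩
    have : z ∈ Q.roots := (Polynomial.mem_roots hQ0).2 hz
    simp [hQr] at this

lemma aux_change (V' : Polynomial ℝ) (c : ℝ) (hc : V'.eval c = 0)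
    (hsimple : (Polynomial.derivative V').eval c ≠ 0) :
    ∀ᶠ δ in nhdsWithin (0 : ℝ) (Ioi 0), V'.eval (c - δ) * V'.eval (c + δ) < 0 := by
  obtain ⟨W, rfl⟩ := Polynomial.dvd_iff_isRoot.2 hc
  have hW : W.eval c ≠ 0 := by
    simpa [Polynomial.derivative_mul] using hsimple
  have hlim : Tendsto (fun δ => W.eval (c - δ) * W.eval (c + δ)) (nhdsWithin 0 (Ioi 0))
      (nhds (W.eval c * W.eval c)) := by
    have : Continuous fun δ => W.eval (c - δ) * W.eval (c + δ) := by fun_prop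
    have h := this.tendsto 0
    simp only [sub_zero, add_zero] at h
    exact h.mono_left nhdsWithin_le_nhds
  filter_upwards [hlim.eventually_const_lt (mul_self_pos.2 hW), self_mem_nhdsWithin] with δ h1 h2
  have h2' : 0 < δ := h2
  simp only [Polynomial.eval_mul, Polynomial.eval_sub, Polynomial.eval_X, Polynomial.eval_C]
  have : 0 < δ ^ 2 * (W.eval (c - δ) * W.eval (c + δ)) :=
    mul_pos (by positivity) h1
  nlinarith

lemma aux_h (σa σm : ℝ) (ha : 0 < σa) (hm : 0 < σm) (x : ℝ) :
    ∫ y in (0 : ℝ)..x, 1 / (σa ^ 2 + σm ^ 2 * y ^ 2) = arctan (σm * x / σa) / (σa * σm) := by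
  have hd : ∀ x, HasDerivAt (fun x => arctan (σm * x / σa) / (σa * σm))
      (1 / (σa ^ 2 + σm ^ 2 * x ^ 2)) x := by
    intro x
    have h1 : HasDerivAt (fun x => σm * x / σa) (σm / σa) x := by
      simpa using ((hasDerivAt_id x).const_mul σm).div_const σa
    have := (h1.arctan).div_const (σa * σm)
    refine this.congr_deriv ?_
    have := aux_spos σm ha x
    field_simp
  rw [intervalIntegral.integral_eq_sub_of_hasDerivAt (fun x _ => hd x)]
  · simp
  · refine Continuous.intervalIntegrable ?_ _ _
    exact continuous_const.div (by fun_prop) fun y => (aux_spos σm ha y).ne'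

lemma aux_facts (V' : Polynomial ℝ) (σa σm : ℝ) (ha : 0 < σa)
    (hodd : Odd V'.natDegree) (hlead : 0 < V'.leadingCoeff) (θ μ : ℝ) (hθ : 0 < θ) :
    Integrable (fun x => V'.eval x * pV V' θ σa σm μ x) ∧
      (FV V' θ σa σm μ = 0 ↔ ∫ x, V'.eval x * pV V' θ σa σm μ x = 0) := by
  obtain ⟨R₀, hR₀, hR1, hR2⟩ := aux_poly_large V' hodd hlead
  set b : ℝ → ℝ := fun y => V'.eval y + θ * (y - μ) with hbdef
  have hb : Continuous b := by fun_prop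
  have hp : ∀ x, pV V' θ σa σm μ x = pg b σa σm x := fun x => rfl
  set R := max R₀ (2 * |μ|) with hRdef
  have hR : 1 ≤ R := hR₀.trans (le_max_left _ _)
  have hRμ : 2 * |μ| ≤ R := le_max_right _ _
  have hRR : R₀ ≤ R := le_max_left _ _
  have hμ1 := le_abs_self μ
  have hμ2 := neg_abs_le μ
  have hk : 0 < θ / 2 := by linarith
  have p1 : ∀ x, R ≤ x → θ / 2 * x ≤ θ * (x - μ) := fun x hx => by
    have : 0 ≤ θ * (x / 2 - μ) := mul_nonneg hθ.le (by linarith)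
    linarith
  have p2 : ∀ x, x ≤ -R → θ * (x - μ) ≤ θ / 2 * x := fun x hx => by
    have : 0 ≤ θ * (μ - x / 2) := mul_nonneg hθ.le (by linarith)
    linarith
  have b1 : ∀ x, R ≤ x → θ / 2 * x ≤ b x := fun x hx => by
    have := hR1 x (hRR.trans hx)
    have := p1 x hx
    simp only [hbdef]; linarith
  have b2 : ∀ x, x ≤ -R → b x ≤ θ / 2 * x := fun x hx => by
    have := hR2 x (by linarith)
    have := p2 x hx
    simp only [hbdef]; linarith
  obtain ⟨hI, h0⟩ := aux_zero b hb σa σm ha (θ / 2) R hk hR b1 b2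
  have habs : ∀ x, R < |x| → |V'.eval x| ≤ 1 * |b x| ∧ |x - μ| ≤ θ⁻¹ * |b x| ∧
      |(1 : ℝ)| ≤ (θ / 2)⁻¹ * |b x| := by
    intro x hx
    rw [inv_mul_eq_div, inv_mul_eq_div, le_div_iff₀ hθ, le_div_iff₀ hk, one_mul, abs_one, one_mul]
    rcases lt_abs.1 hx with h | h
    · have q1 := hR1 x (hRR.trans h.le)
      have q2 := p1 x h.le
      have q3 : θ / 2 * 1 ≤ θ / 2 * x := by gcongr; linarith
      have q4 : 0 ≤ x - μ := by linarith [abs_nonneg μ]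
      have q5 : b x = V'.eval x + θ * (x - μ) := rfl
      rw [abs_of_pos q1, abs_of_nonneg q4, abs_of_nonneg (by linarith), q5]
      refine ⟨by linarith, by linarith, by linarith⟩
    · have h' : x ≤ -R := by linarith
      have q1 := hR2 x (by linarith)
      have q2 := p2 x h'
      have q3 : θ / 2 * x ≤ θ / 2 * (-1) := by gcongr; linarith
      have q4 : x - μ ≤ 0 := by linarith [abs_nonneg μ]
      have q5 : b x = V'.eval x + θ * (x - μ) := rfl
      rw [abs_of_neg q1, abs_of_nonpos q4, abs_of_nonpos (by linarith), q5]
      refine ⟨by linarith, by linarith, by linarith⟩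
  have I1 := aux_dom b hb σa σm ha hI (fun x => V'.eval x) V'.continuous 1 R
    fun x hx => (habs x hx).1
  have I2 := aux_dom b hb σa σm ha hI (fun x => x - μ) (by fun_prop) θ⁻¹ R
    fun x hx => (habs x hx).2.1
  have I3 := aux_dom b hb σa σm ha hI (fun _ => 1) (by fun_prop) (θ / 2)⁻¹ R
    fun x hx => (habs x hx).2.2
  simp only [one_mul] at I3
  simp only [FV, hp]
  refine ⟨I1, ?_⟩
  have hpos : 0 < ∫ x, pg b σa σm x :=
    integral_pos_of_integrable_nonneg_nonzero (x := 0) (pg_cont b hb σa σm ha) I3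
      (fun x => (pg_pos b σa σm x ha).le) (pg_pos b σa σm 0 ha).ne'
  have hsum : (∫ x, V'.eval x * pg b σa σm x) + θ * ∫ x, (x - μ) * pg b σa σm x = 0 := by
    rw [← integral_const_mul, ← integral_add I1 (I2.const_mul θ), ← h0]
    congr 1; ext x; simp only [hbdef]; ring
  rw [div_eq_zero_iff, or_iff_left hpos.ne']
  constructor
  · intro h; rw [h] at hsum; linarith
  · intro h
    rw [h, zero_add] at hsum
    exact (mul_eq_zero.1 hsum).resolve_left hθ.ne'

lemma aux_ii (b : ℝ → ℝ) (hb : Continuous b) (σa σm : ℝ) (ha : 0 < σa) (x : ℝ) :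
    IntervalIntegrable (fun y => b y / (σa ^ 2 + σm ^ 2 * y ^ 2)) volume 0 x :=
  (hb.div (by fun_prop) (fun y => (aux_spos σm ha y).ne')).intervalIntegrable _ _

lemma aux_split_h (V' : Polynomial ℝ) (σa σm : ℝ) (ha : 0 < σa) (hm : 0 < σm) (θ μ x : ℝ) :
    pV V' θ σa σm μ x = pV V' θ σa σm 0 x *
      exp (2 * θ * μ * (arctan (σm * x / σa) / (σa * σm))) := by
  unfold pV
  rw [mul_assoc, ← exp_add, ← aux_h σa σm ha hm x]
  congr 2
  rw [← intervalIntegral.integral_const_mul, ← intervalIntegral.integral_const_mul,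
    ← intervalIntegral.integral_const_mul, ← intervalIntegral.integral_add]
  · congr 1; ext y; ring
  · exact (aux_ii (fun y => V'.eval y + θ * (y - 0)) (by fun_prop) σa σm ha x).const_mul _
  · exact (aux_ii (fun _ => 1) (by fun_prop) σa σm ha x).const_mul _

lemma aux_split_phi (V' : Polynomial ℝ) (σa σm : ℝ) (ha : 0 < σa) (θ μ x : ℝ) :
    pV V' θ σa σm μ x = pg (fun y => V'.eval y) σa σm x *
      exp (-2 * θ * ∫ y in (0 : ℝ)..x, (y - μ) / (σa ^ 2 + σm ^ 2 * y ^ 2)) := by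
  unfold pV pg
  rw [mul_assoc, ← exp_add]
  congr 2
  rw [← intervalIntegral.integral_const_mul, ← intervalIntegral.integral_const_mul,
    ← intervalIntegral.integral_const_mul, ← intervalIntegral.integral_add]
  · congr 1; ext y; ring
  · exact (aux_ii (fun y => V'.eval y) V'.continuous σa σm ha x).const_mul _
  · exact (aux_ii (fun y => y - μ) (by fun_prop) σa σm ha x).const_mul _

lemma aux_signconc (V' : Polynomial ℝ) (σa σm : ℝ) (ha : 0 < σa)
    (hodd : Odd V'.natDegree) (hlead : 0 < V'.leadingCoeff) (μ : ℝ) (hμ : V'.eval μ ≠ 0) :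
    ∀ᶠ θ in atTop, 0 < V'.eval μ * ∫ x, V'.eval x * pV V' θ σa σm μ x := by
  obtain ⟨c1, c2, c3⟩ := aux_phi σa σm ha μ _ rfl
  have hw := pg_cont (fun y => V'.eval y) V'.continuous σa σm ha
  have := aux_conc (fun x => V'.eval μ * (V'.eval x * pg (fun y => V'.eval y) σa σm x)) _
    (continuous_const.mul (V'.continuous.mul hw)) c1 μ
    (by
      have := pg_pos (fun y => V'.eval y) σa σm μ ha
      have := mul_pos (mul_self_pos.2 hμ) this
      linarith) c2 c3 (by
      intro θ hθ
      have := (aux_facts V' σa σm ha hodd hlead θ μ hθ).1.const_mul (V'.eval μ)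
      refine this.congr (Eventually.of_forall fun x => ?_)
      simp only [aux_split_phi V' σa σm ha]
      ring)
  filter_upwards [this] with θ h
  rw [← integral_const_mul]
  refine h.trans_eq (integral_congr_ae (Eventually.of_forall fun x => ?_))
  simp only
  rw [aux_split_phi V' σa σm ha]
  ring

/-- If V' is a real polynomial of odd degree with positive leading coefficient
having exactly N real roots, all simple, then for all sufficiently large θ the self-consistency
equation F_V(θ,σa,σm)[μ] = 0 has exactly N solutions, i.e. the Itô McKean–Vlasov SDE has exactly
N stationary measures. -/
theorem stmt3 (V' : Polynomial ℝ) (N : ℕ) (σa σm : ℝ) (hσa : 0 < σa) (hσm : 0 < σm)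
    (hodd : Odd V'.natDegree) (hlead : 0 < V'.leadingCoeff)
    (hroots : {x : ℝ | V'.eval x = 0}.ncard = N)
    (hsimple : ∀ x : ℝ, V'.eval x = 0 → (Polynomial.derivative V').eval x ≠ 0) :
    ∃ θc : ℝ, 0 < θc ∧ ∀ θ : ℝ, θc < θ →
      {μ : ℝ | FV V' θ σa σm μ = 0}.ncard = N := by
  obtain ⟨T, Q, hT, hQ, hfac⟩ := aux_poly_sign V' hodd hlead hsimple
  have hTmem : ∀ c, c ∈ T ↔ V'.eval c = 0 := fun c => by
    rw [← Finset.mem_coe, hT]; rfl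
  have hN : T.card = N := by
    rw [← hroots, ← hT, Set.ncard_coe_finset]
  -- common half-width of disjoint intervals around the roots
  obtain ⟨δ, hδ0, hδ1, hδ2⟩ : ∃ δ : ℝ, 0 < δ ∧
      (∀ c ∈ T, V'.eval (c - δ) * V'.eval (c + δ) < 0) ∧
      (∀ c ∈ T, ∀ d ∈ T, c ≠ d → 2 * δ < |c - d|) := by
    have e1 : ∀ᶠ δ in nhdsWithin (0 : ℝ) (Ioi 0),
        ∀ c ∈ T, V'.eval (c - δ) * V'.eval (c + δ) < 0 := by
      rw [Filter.eventually_all_finset]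
      intro c hc
      exact aux_change V' c ((hTmem c).1 hc) (hsimple c ((hTmem c).1 hc))
    have e2 : ∀ᶠ δ in nhdsWithin (0 : ℝ) (Ioi 0),
        ∀ c ∈ T, ∀ d ∈ T, c ≠ d → 2 * δ < |c - d| := by
      rw [Filter.eventually_all_finset]
      intro c _
      rw [Filter.eventually_all_finset]
      intro d _
      by_cases hcd : c = d
      · exact Eventually.of_forall fun _ h => (h hcd).elim
      · have h0 : 0 < |c - d| := abs_pos.2 (sub_ne_zero.2 hcd)
        have : ∀ᶠ δ : ℝ in nhds 0, 2 * δ < |c - d| := by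
          have hc : Continuous fun δ : ℝ => 2 * δ := by fun_prop
          exact hc.continuousAt.eventually (gt_mem_nhds (by simpa using h0))
        filter_upwards [nhdsWithin_le_nhds this] with δ h _ using h
    obtain ⟨δ, ⟨h1, h2⟩, h3⟩ := ((e1.and e2).and self_mem_nhdsWithin).exists
    exact ⟨δ, h3, h1, h2⟩
  have hev : ∀ᶠ θ in atTop, ∀ c ∈ T,
      0 < V'.eval (c - δ) * (∫ x, V'.eval x * pV V' θ σa σm (c - δ) x) ∧
      0 < V'.eval (c + δ) * (∫ x, V'.eval x * pV V' θ σa σm (c + δ) x) := by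
    rw [Filter.eventually_all_finset]
    intro c hc
    have := hδ1 c hc
    exact (aux_signconc V' σa σm hσa hodd hlead _ (left_ne_zero_of_mul this.ne)).and
      (aux_signconc V' σa σm hσa hodd hlead _ (right_ne_zero_of_mul this.ne))
  obtain ⟨θ₀, hθ₀⟩ := eventually_atTop.1 hev
  refine ⟨max θ₀ 1, by positivity, fun θ hθ => ?_⟩
  have hθ1 : 0 < θ := by have := le_max_right θ₀ 1; linarith
  have hsgn := hθ₀ θ ((le_max_left _ _).trans hθ.le)
  set h : ℝ → ℝ := fun x => arctan (σm * x / σa) / (σa * σm) with hh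
  have hcont : Continuous h := by
    rw [hh]; exact (continuous_arctan.comp (by fun_prop)).div_const _
  have hmono : StrictMono h := by
    intro x y hxy
    simp only [hh]
    have : σm * x / σa < σm * y / σa := by gcongr
    have := arctan_strictMono this
    gcongr
  have hM : ∀ x, |h x| ≤ (π / 2) / (σa * σm) := by
    intro x
    simp only [hh]
    rw [abs_div, abs_of_pos (mul_pos hσa hσm)]
    gcongr
    exact (abs_lt.2 ⟨neg_pi_div_two_lt_arctan _, arctan_lt_pi_div_two _⟩).le
  set F : ℝ → ℝ := fun x => V'.eval x * pV V' θ σa σm 0 x with hF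
  have hFI : Integrable F := (aux_facts V' σa σm hσa hodd hlead θ 0 hθ1).1
  have hpc : Continuous (pV V' θ σa σm 0) :=
    pg_cont (fun y => V'.eval y + θ * (y - 0)) (by fun_prop) σa σm hσa
  have hpp : ∀ x, 0 < pV V' θ σa σm 0 x := fun x =>
    pg_pos (fun y => V'.eval y + θ * (y - 0)) σa σm x hσa
  have hFc : Continuous F := V'.continuous.mul hpc
  have hGeq : ∀ μ, ∫ x, V'.eval x * pV V' θ σa σm μ x = ∫ x, F x * exp ((2 * θ * μ) * h x) := by
    intro μ
    congr 1; ext x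
    rw [aux_split_h V' σa σm hσa hσm, ← mul_assoc]
  have hform : ∀ x, F x * ∏ c ∈ T, (h x - h c)
      = Q x * pV V' θ σa σm 0 x * ∏ c ∈ T, ((x - c) * (h x - h c)) := by
    intro x
    simp only [hF]
    rw [hfac, Finset.prod_mul_distrib]; ring
  have hprodpos : ∀ x c : ℝ, x ≠ c → 0 < (x - c) * (h x - h c) := by
    intro x c hxc
    rcases lt_or_gt_of_ne hxc with hlt | hlt
    · exact mul_pos_of_neg_of_neg (sub_neg.2 hlt) (sub_neg.2 (hmono hlt))
    · exact mul_pos (sub_pos.2 hlt) (sub_pos.2 (hmono hlt))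
  have hupper := aux_upper h hcont _ hM T F hFc hFI (fun x => by
      rw [hform]
      refine mul_nonneg (mul_pos (hQ x) (hpp x)).le (Finset.prod_nonneg fun c _ => ?_)
      by_cases hxc : x = c
      · simp [hxc]
      · exact (hprodpos x c hxc).le) (by
      obtain ⟨x, hx⟩ := T.exists_notMem
      refine ⟨x, ?_⟩
      rw [hform]
      refine (mul_pos (mul_pos (hQ x) (hpp x)) (Finset.prod_pos fun c hc => ?_)).ne'
      exact hprodpos x c (by rintro rfl; exact hx hc))
  set Z := {μ : ℝ | FV V' θ σa σm μ = 0} with hZ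
  have hZmem : ∀ μ, μ ∈ Z ↔ ∫ x, F x * exp ((2 * θ * μ) * h x) = 0 := by
    intro μ
    rw [← hGeq, ← (aux_facts V' σa σm hσa hodd hlead θ μ hθ1).2]; rfl
  have hle : Z.encard ≤ N := by
    rw [← hN]
    refine le_trans ?_ hupper
    have hinj : Function.Injective fun μ : ℝ => 2 * θ * μ :=
      mul_right_injective₀ (by positivity)
    rw [← hinj.encard_image]
    refine Set.encard_le_encard ?_
    rintro _ ⟨μ, hμ, rfl⟩
    exact (hZmem μ).1 hμ
  have hGc : Continuous fun μ => ∫ x, F x * exp ((2 * θ * μ) * h x) := by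
    have h1 : Continuous fun s => ∫ x, F x * exp (s * h x) :=
      continuous_iff_continuousAt.2 fun s => (aux_deriv F h hFI hcont _ hM s).continuousAt
    exact h1.comp (by fun_prop : Continuous fun μ : ℝ => 2 * θ * μ)
  have hex : ∀ c : T, ∃ z ∈ Icc ((c : ℝ) - δ) (c + δ), z ∈ Z := by
    rintro ⟨c, hc⟩
    obtain ⟨s1, s2⟩ := hsgn c hc
    have s3 := hδ1 c hc
    rw [hGeq] at s1 s2
    have hcd : c - δ ≤ c + δ := by linarith
    rcases lt_or_gt_of_ne (left_ne_zero_of_mul s3.ne) with hneg | hpos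
    · have hpos2 := (neg_iff_pos_of_mul_neg s3).1 hneg
      have t1 := neg_of_mul_pos_right s1 hneg.le
      have t2 := pos_of_mul_pos_right s2 hpos2.le
      obtain ⟨z, hz1, hz2⟩ := intermediate_value_Icc hcd hGc.continuousOn ⟨t1.le, t2.le⟩
      exact ⟨z, hz1, (hZmem z).2 hz2⟩
    · have hneg2 := (pos_iff_neg_of_mul_neg s3).1 hpos
      have t1 := pos_of_mul_pos_right s1 hpos.le
      have t2 := neg_of_mul_pos_right s2 hneg2.le
      obtain ⟨z, hz1, hz2⟩ := intermediate_value_Icc' hcd hGc.continuousOn ⟨t2.le, t1.le⟩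
      exact ⟨z, hz1, (hZmem z).2 hz2⟩
  choose z hz1 hz2 using hex
  have hzinj : Function.Injective z := by
    intro c d hcd
    by_contra hne
    have := hδ2 c c.2 d d.2 (fun h => hne (Subtype.ext h))
    have a1 := hz1 c
    have a2 := hz1 d
    rw [← hcd] at a2
    have : |(c : ℝ) - d| ≤ 2 * δ :=
      abs_le.2 ⟨by linarith [a1.1, a1.2, a2.1, a2.2], by linarith [a1.1, a1.2, a2.1, a2.2]⟩
    linarith
  have hge : (N : ℕ∞) ≤ Z.encard := by
    have : (range z).encard = N := by
      rw [← Set.image_univ, hzinj.encard_image, Set.encard_univ]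
      simp [hN]
    rw [← this]
    exact Set.encard_le_encard (by rintro _ ⟨i, rfl⟩; exact hz2 i)
  have : Z.encard = N := le_antisymm hle hge
  rw [Set.ncard, this]; rfl
end
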